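/- arXiv:math/0312287 — 3 statements merged into one kernel-verified Lean document; each statement's English description precedes it below -/
import Mathlib

section
/- For every degree sequence π of a tree with boundary, the class T_π contains an SLO*-tree, and this SLO*-tree is uniquely determined up to isomorphism (any two SLO*-trees in T_π are isomorphic). -/
/-!
In an SLO*-ordering the root comes first, the interior vertices follow in order of increasing
degree, and the boundary vertices come last. Numbering the vertices `0, …, n - 1` along the
ordering therefore turns the degrees into the sequence obtained by sorting `π` with the degree `1`
placed last (`degKey`), and the tree is encoded by its parent function `p`, which satisfies
`p w < w` and, by (S1) and (S2), is monotone (`IsSpiral`, `exists_spiral_iso`).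

Uniqueness (`IsSpiral.unique`): the degrees determine the number of children of each vertex, that
is, the sizes of the fibres of `p` (`degree_parentGraph`), and a monotone function is determined by
its fibre sizes.

Existence (`exists_spiral`, `exists_spiral_of_tree`): for the sorted degree sequence of any tree,
children are handed out to `0, 1, 2, …` as consecutive intervals. The degree sum `2 (n - 1)` makes
the intervals cover exactly `0, …, n - 1`, and since all interior vertices precede all boundary
vertices, every vertex receives its parent among the smaller numbers. The resulting graph is
connected with `n - 1` edges, hence a tree, and the natural order is an SLO*-ordering of it
(`IsSpiral.isSLOStarTree`).
-/

/-!
Common definitions for Faber-Krahn type inequalities for trees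
(Bıyıkoğlu–Leydold, "Faber-Krahn Type Inequalities for Trees").

A *tree (graph) with boundary* is a finite simple connected graph in which
boundary vertices are exactly the vertices of degree 1 and interior vertices
are the vertices of degree ≥ 2; both sets are required to be nonempty.
The Dirichlet operator is the Laplacian restricted to functions vanishing on
the boundary; `dirichletLambda` is its smallest eigenvalue.
-/

open Finset
open scoped Classical

noncomputable section

namespace FK

variable {V : Type*} [Fintype V] [DecidableEq V]

/-- A vertex is a boundary vertex iff it has degree `1`. -/
def IsBoundary (G : SimpleGraph V) (v : V) : Prop := G.degree v = 1

/-- A vertex is an interior vertex iff it has degree at least `2`. -/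
def IsInterior (G : SimpleGraph V) (v : V) : Prop := 2 ≤ G.degree v

/-- A tree with boundary: a tree with at least one interior and
one boundary vertex. -/
def IsTreeWithBoundary (G : SimpleGraph V) : Prop :=
  G.IsTree ∧ (∃ v, IsInterior G v) ∧ (∃ v, IsBoundary G v)

/-- A connected graph with boundary: every vertex is either a boundary vertex
(degree 1) or an interior vertex (degree ≥ 2), both kinds occur, and no edge
joins two boundary vertices. -/
def IsGraphWithBoundary (G : SimpleGraph V) : Prop :=
  G.Connected ∧ (∀ v, IsBoundary G v ∨ IsInterior G v) ∧
    (∃ v, IsInterior G v) ∧ (∃ v, IsBoundary G v) ∧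
    (∀ v w, G.Adj v w → IsBoundary G v → ¬ IsBoundary G w)

/-- The finset of interior vertices. -/
def interiorFinset (G : SimpleGraph V) : Finset V := univ.filter (fun v => IsInterior G v)

/-- The finset of boundary vertices. -/
def boundaryFinset (G : SimpleGraph V) : Finset V := univ.filter (fun v => IsBoundary G v)

/-- The degree sequence of `G`, as a multiset. -/
def degreeMultiset (G : SimpleGraph V) : Multiset ℕ := Finset.univ.val.map (fun v => G.degree v)

/-- The graph Laplacian `Δ = D - A` applied to a function `f : V → ℝ`. -/
def lapApply (G : SimpleGraph V) (f : V → ℝ) (v : V) : ℝ :=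
  (G.degree v : ℝ) * f v - ∑ w ∈ G.neighborFinset v, f w

/-- `f` (vanishing on the boundary, nonzero) is an eigenfunction of the
Dirichlet operator `Δ₀` with eigenvalue `μ`: the eigenvalue equation holds at
every interior vertex. -/
def IsDirichletEigenpair (G : SimpleGraph V) (μ : ℝ) (f : V → ℝ) : Prop :=
  f ≠ 0 ∧ (∀ v, IsBoundary G v → f v = 0) ∧
    ∀ v, IsInterior G v → lapApply G f v = μ * f v

/-- The first (smallest) Dirichlet eigenvalue `λ(G)`. -/
def dirichletLambda (G : SimpleGraph V) : ℝ :=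
  sInf {μ : ℝ | ∃ f : V → ℝ, IsDirichletEigenpair G μ f}

/-- The quadratic form `⟨Δ f, f⟩ = Σ_{(u,v)∈E} (f u - f v)²` of the Laplacian
(each edge counted once). -/
def quadForm (G : SimpleGraph V) (f : V → ℝ) : ℝ :=
  (∑ v, ∑ w ∈ G.neighborFinset v, (f v - f w) ^ 2) / 2

/-- The Rayleigh quotient `R_G(f)`. -/
def rayleigh (G : SimpleGraph V) (f : V → ℝ) : ℝ :=
  quadForm G f / ∑ v, f v ^ 2

/-- `w` is a child of `v` in the tree `G` rooted at `v₀`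
(heights are distances from the root `v₀`). -/
def IsChild (G : SimpleGraph V) (v₀ v w : V) : Prop :=
  G.Adj v w ∧ G.dist v₀ w = G.dist v₀ v + 1

/-- A spiral-like ordering (SLO-ordering) of the vertices of the tree `G`
rooted at `v₀`: a (strict) well-ordering `lt` satisfying (S1)-(S3). -/
def IsSLOOrdering (G : SimpleGraph V) (v₀ : V) (lt : V → V → Prop) : Prop :=
  IsStrictTotalOrder V lt ∧
  (∀ v w, lt v w → G.dist v₀ v ≤ G.dist v₀ w) ∧
  (∀ v₁ v₂ w₁ w₂, lt v₁ v₂ → IsChild G v₀ v₁ w₁ → IsChild G v₀ v₂ w₂ → lt w₁ w₂) ∧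
  (∀ v w, lt v w → IsBoundary G v → IsBoundary G w)

/-- A spiral-like ordering with increasing degrees (SLO*-ordering):
additionally (S4). -/
def IsSLOStarOrdering (G : SimpleGraph V) (v₀ : V) (lt : V → V → Prop) : Prop :=
  IsSLOOrdering G v₀ lt ∧
  ∀ v w, lt v w → IsInterior G v → IsInterior G w → G.degree v ≤ G.degree w

/-- An SLO-tree: a tree with boundary admitting an SLO-ordering. -/
def IsSLOTree (G : SimpleGraph V) : Prop :=
  IsTreeWithBoundary G ∧ ∃ (v₀ : V) (lt : V → V → Prop), IsSLOOrdering G v₀ lt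

/-- An SLO*-tree: a tree with boundary admitting an SLO*-ordering. -/
def IsSLOStarTree (G : SimpleGraph V) : Prop :=
  IsTreeWithBoundary G ∧ ∃ (v₀ : V) (lt : V → V → Prop), IsSLOStarOrdering G v₀ lt

end FK

namespace FK

/-! ### Sorted degree sequences -/

lemma eq_of_monotone_of_map_eq {α : Type*} [LinearOrder α] {n : ℕ} {f g : Fin n → α}
    (hf : Monotone f) (hg : Monotone g)
    (h : (Finset.univ.val.map f : Multiset α) = Finset.univ.val.map g) : f = g := by
  apply List.ofFn_injective
  have hp : (List.ofFn f).Perm (List.ofFn g) := by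
    rw [← Multiset.coe_eq_coe]
    simpa [List.ofFn_eq_map, Fin.univ_def] using h
  exact hp.eq_of_pairwise' hf.sortedLE_ofFn.pairwise hg.sortedLE_ofFn.pairwise

/-- The position of a degree in the order imposed by (S3) and (S4): interior degrees in increasing
order, the boundary degree `1` last. -/
def degKey (d : ℕ) : ℕ∞ := if d = 1 then ⊤ else d

lemma degKey_injective : Function.Injective degKey := by
  intro a b h
  unfold degKey at h
  split_ifs at h with h1 h2 h2
  · omega
  · simp at h
  · simp at h
  · exact_mod_cast h

lemma degKey_le_iff {a b : ℕ} : degKey a ≤ degKey b ↔ b = 1 ∨ (a ≠ 1 ∧ a ≤ b) := by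
  unfold degKey
  split_ifs with h1 h2 h2 <;> simp_all

/-! ### Graphs of parent functions -/

/-- The graph on `{0, …, n - 1}` in which every `w` is joined to `p w` whenever `p w < w`. -/
def parentGraph (n : ℕ) (p : ℕ → ℕ) : SimpleGraph (Fin n) where
  Adj v w := (v.val < w.val ∧ p w = v) ∨ (w.val < v.val ∧ p v = w)
  symm := ⟨fun _ _ h => h.symm⟩
  loopless := ⟨fun v h => by omega⟩

lemma parentGraph_adj {n : ℕ} {p : ℕ → ℕ} {v w : Fin n} : (parentGraph n p).Adj v w ↔
    (v.val < w.val ∧ p w = v) ∨ (w.val < v.val ∧ p v = w) := Iff.rfl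

/-- `p` is the parent function of an SLO*-tree whose vertices are numbered `0, …, n - 1` along an
SLO*-ordering. The root `0` is given the value `p 0 = 0`. -/
structure IsSpiral (n : ℕ) (p : ℕ → ℕ) : Prop where
  zero : p 0 = 0
  lt : ∀ w, 0 < w → w < n → p w < w
  mono : ∀ v w, v ≤ w → w < n → p v ≤ p w
  key : ∀ v w : Fin n, v ≤ w →
    degKey ((parentGraph n p).degree v) ≤ degKey ((parentGraph n p).degree w)

/-- The degree of a vertex in terms of its fibre under `p`. The fibre of the root contains the
root itself; a vertex other than the root has its parent as an additional neighbour. -/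
lemma degree_parentGraph {n : ℕ} {p : ℕ → ℕ} (p0 : p 0 = 0)
    (hlt : ∀ w, 0 < w → w < n → p w < w) (i : Fin n) :
    (parentGraph n p).degree i + (if i.val = 0 then 2 else 0) =
      #{j : Fin n | p j = i} + 1 := by
  rw [← SimpleGraph.card_neighborFinset_eq_degree]
  split_ifs with hi
  · have : ({j : Fin n | p j = i} : Finset (Fin n)) =
        insert i ((parentGraph n p).neighborFinset i) := by
      ext j
      have := hlt j
      simp only [mem_filter, mem_univ, true_and, mem_insert, SimpleGraph.mem_neighborFinset,
        parentGraph_adj, Fin.ext_iff]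
      constructor
      · intro h
        by_cases hj : j.val = 0
        · omega
        · right; left; omega
      · rintro (h | h | h)
        · rw [h, hi, p0]
        · exact h.2
        · omega
    rw [this, card_insert_of_notMem (by simp)]
  · have hpi := hlt i (by omega) i.2
    have : (parentGraph n p).neighborFinset i =
        insert ⟨p i, by omega⟩ ({j : Fin n | p j = i} : Finset (Fin n)) := by
      ext j
      have := hlt j
      simp only [mem_filter, mem_univ, true_and, mem_insert, SimpleGraph.mem_neighborFinset,
        parentGraph_adj, Fin.ext_iff]
      constructor
      · rintro (h | h)
        · right; exact h.2
        · left; exact h.2.symm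
      · rintro (h | h)
        · right; omega
        · left
          have : j.val ≠ 0 := by
            intro h0; rw [h0, p0] at h; omega
          omega
    rw [this, card_insert_of_notMem]
    · simp only [mem_filter, mem_univ, true_and]
      intro h
      by_cases h0 : p i = 0
      · rw [h0, p0] at h; omega
      · have := hlt (p i) (by omega) (by omega)
        omega

/-- A spiral parent function is determined by the degree multiset: the sorted degrees give the
fibre sizes, and a monotone function is determined by its fibre sizes. -/
lemma IsSpiral.unique {n : ℕ} {p q : ℕ → ℕ} (hp : IsSpiral n p) (hq : IsSpiral n q)
    (h : degreeMultiset (parentGraph n p) = degreeMultiset (parentGraph n q)) :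
    parentGraph n p = parentGraph n q := by
  have hdeg : ∀ i, (parentGraph n p).degree i = (parentGraph n q).degree i := by
    have := eq_of_monotone_of_map_eq (f := fun i => degKey ((parentGraph n p).degree i))
      (g := fun i => degKey ((parentGraph n q).degree i)) (fun _ _ h => hp.key _ _ h)
      (fun _ _ h => hq.key _ _ h) (by
        have := congrArg (Multiset.map degKey) h
        simpa [degreeMultiset, Multiset.map_map, Function.comp_def] using this)
    intro i
    exact degKey_injective (congrFun this i)
  have hpq : (fun i : Fin n => p i) = fun i : Fin n => q i := by
    refine eq_of_monotone_of_map_eq (fun v w h => hp.mono _ _ h w.2)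
      (fun v w h => hq.mono _ _ h w.2) ?_
    have hb : ∀ {r : ℕ → ℕ}, IsSpiral n r → ∀ j : Fin n, r j < n := by
      intro r hr j
      by_cases hj : j.val = 0
      · rw [hj, hr.zero]; have := j.2; omega
      · have := hr.lt j (by omega) j.2
        omega
    ext a
    rw [Multiset.count_map, Multiset.count_map]
    by_cases ha : a < n
    · have h1 := degree_parentGraph hp.zero hp.lt ⟨a, ha⟩
      have h2 := degree_parentGraph hq.zero hq.lt ⟨a, ha⟩
      rw [hdeg ⟨a, ha⟩] at h1
      have h3 := Nat.succ_injective (h1.symm.trans h2)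
      simp only [Finset.card_def, Finset.filter_val] at h3
      simpa [eq_comm] using h3
    · have h0 : ∀ {r : ℕ → ℕ}, IsSpiral n r →
          (Multiset.filter (fun j : Fin n => a = r j) univ.val) = 0 := by
        intro r hr
        rw [Multiset.filter_eq_nil]
        intro j _ hj
        have := hb hr j
        omega
      rw [h0 hp, h0 hq]
  ext v w
  have h1 := congrFun hpq v
  have h2 := congrFun hpq w
  rw [parentGraph_adj, parentGraph_adj, h1, h2]

/-! ### Parents in a rooted tree -/

lemma exists_parent {V : Type*} {G : SimpleGraph V} (hG : G.Connected) {v₀ v : V} (hv : v ≠ v₀) :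
    ∃ u, G.Adj u v ∧ G.dist v₀ v = G.dist v₀ u + 1 := by
  obtain ⟨q, hq⟩ := hG.exists_walk_length_eq_dist v₀ v
  have hnil : ¬ q.Nil := fun h => hv h.eq.symm
  refine ⟨q.penultimate, q.adj_penultimate hnil, ?_⟩
  have h1 := G.dist_le q.dropLast
  have h2 := (q.adj_penultimate hnil).diff_dist_adj (u := v₀)
  have h3 : q.dropLast.length + 1 = q.length := by
    simpa using SimpleGraph.Walk.length_dropLast_add_one hnil
  omega

lemma parent_unique {V : Type*} {G : SimpleGraph V} (hG : G.IsTree) {v₀ v u u' : V}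
    (hu : G.Adj u v) (hu' : G.Adj u' v) (h : G.dist v₀ v = G.dist v₀ u + 1)
    (h' : G.dist v₀ v = G.dist v₀ u' + 1) : u = u' := by
  obtain ⟨q, hq⟩ := hG.connected.exists_walk_length_eq_dist v₀ u
  obtain ⟨q', hq'⟩ := hG.connected.exists_walk_length_eq_dist v₀ u'
  have hp : (q.concat hu).IsPath := SimpleGraph.Walk.isPath_of_length_eq_dist _ (by simp; omega)
  have hp' : (q'.concat hu').IsPath := SimpleGraph.Walk.isPath_of_length_eq_dist _ (by simp; omega)
  have := (hG.isAcyclic.subsingleton_path _ _).elim ⟨_, hp⟩ ⟨_, hp'⟩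
  have := congrArg SimpleGraph.Walk.penultimate (congrArg Subtype.val this)
  simpa using this

/-! ### Spiral parent functions give SLO*-trees -/

lemma parentGraph_connected {n : ℕ} {p : ℕ → ℕ} (hn : 0 < n)
    (hlt : ∀ w, 0 < w → w < n → p w < w) : (parentGraph n p).Connected := by
  have hr : ∀ (w : ℕ) (hw : w < n), (parentGraph n p).Reachable ⟨0, hn⟩ ⟨w, hw⟩ := by
    intro w
    induction w using Nat.strong_induction_on with
    | _ w ih =>
      intro hw
      rcases Nat.eq_zero_or_pos w with rfl | hpos
      · exact SimpleGraph.Reachable.refl _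
      · have h := hlt w hpos hw
        refine (ih (p w) h (by omega)).trans (SimpleGraph.Adj.reachable ?_)
        exact parentGraph_adj.2 (Or.inl ⟨h, rfl⟩)
  have : Nonempty (Fin n) := ⟨⟨0, hn⟩⟩
  exact ⟨fun v w => (hr v v.2).symm.trans (hr w w.2)⟩

/-- In `parentGraph`, the vertex `p w` is one step closer to the root than `w`. Downward induction:
the neighbour of `w` closer to the root cannot be a child of `w`. -/
lemma dist_parentGraph {n : ℕ} {p : ℕ → ℕ} (hn : 0 < n)
    (hlt : ∀ w, 0 < w → w < n → p w < w) (k : ℕ) : ∀ v w : Fin n, n ≤ w.val + k → 0 < w.val →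
    p w = v → (parentGraph n p).dist ⟨0, hn⟩ w = (parentGraph n p).dist ⟨0, hn⟩ v + 1 := by
  induction k with
  | zero => intro v w h; have := w.2; omega
  | succ k ih =>
    intro v w hk hw hv
    obtain ⟨u, hu, hd⟩ := exists_parent (parentGraph_connected hn hlt) (v₀ := ⟨0, hn⟩) (v := w)
      (by intro h; rw [h] at hw; exact absurd hw (lt_irrefl _))
    rcases parentGraph_adj.1 hu with h | h
    · have : u = v := Fin.ext (h.2.symm.trans hv)
      rw [← this, hd]
    · have := ih w u (by omega) (by omega) h.2
      omega

lemma IsSpiral.isSLOStarTree {n : ℕ} {p : ℕ → ℕ} (hp : IsSpiral n p)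
    (hT : IsTreeWithBoundary (parentGraph n p)) : IsSLOStarTree (parentGraph n p) := by
  have hn : 0 < n := by
    obtain ⟨v, -⟩ := hT.2.1
    have := v.2
    omega
  have hdist : ∀ v w : Fin n, 0 < w.val → p w = v →
      (parentGraph n p).dist ⟨0, hn⟩ w = (parentGraph n p).dist ⟨0, hn⟩ v + 1 :=
    fun v w => dist_parentGraph hn hp.lt n v w (by omega)
  have hchild : ∀ v w : Fin n, IsChild (parentGraph n p) ⟨0, hn⟩ v w → p w = v := by
    rintro v w ⟨hadj, hd⟩
    rcases parentGraph_adj.1 hadj with h | h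
    · exact h.2
    · have := hdist w v (by omega) h.2
      omega
  refine ⟨hT, ⟨0, hn⟩, (· < ·), ⟨inferInstance, ?_, ?_, ?_⟩, ?_⟩
  · have key : ∀ (k : ℕ) (v w : Fin n), w.val = k → v ≤ w →
        (parentGraph n p).dist ⟨0, hn⟩ v ≤ (parentGraph n p).dist ⟨0, hn⟩ w := by
      intro k
      induction k using Nat.strong_induction_on with
      | _ k ih =>
        intro v w hk hvw
        rcases Nat.eq_zero_or_pos v.val with h0 | hv
        · have : v = ⟨0, hn⟩ := Fin.ext h0
          rw [this, SimpleGraph.dist_self]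
          exact Nat.zero_le _
        · have hvw' : v.val ≤ w.val := hvw
          have h1 := hp.lt v hv v.2
          have h2 := hp.lt w (by omega) w.2
          have h3 := ih (p w) (by omega) ⟨p v, by omega⟩ ⟨p w, by omega⟩ rfl
            (hp.mono v w hvw' w.2)
          rw [hdist ⟨p v, by omega⟩ v hv rfl, hdist ⟨p w, by omega⟩ w (by omega) rfl]
          omega
    exact fun v w h => key w v w rfl h.le
  · intro v₁ v₂ w₁ w₂ h h1 h2
    by_contra hcon
    have := hp.mono w₂ w₁ (not_lt.1 hcon) w₁.2
    rw [hchild _ _ h1, hchild _ _ h2] at this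
    exact absurd h (not_lt.2 this)
  · intro v w h hv
    have := degKey_le_iff.1 (hp.key v w h.le)
    exact this.resolve_right fun h' => h'.1 hv
  · intro v w h hv hw
    unfold IsInterior at hv hw
    have := degKey_le_iff.1 (hp.key v w h.le)
    omega

/-! ### SLO*-trees come from spiral parent functions -/

lemma one_le_degree {V : Type*} [Fintype V] [DecidableEq V] {G : SimpleGraph V}
    (hG : IsTreeWithBoundary G) (v : V) : 1 ≤ G.degree v := by
  obtain ⟨u, hu⟩ := hG.2.1
  have : Nontrivial V := by
    unfold IsInterior at hu
    obtain ⟨w, hw⟩ := (G.degree_pos_iff_exists_adj u).1 (by omega)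
    exact ⟨u, w, hw.ne⟩
  exact hG.1.connected.preconnected.degree_pos_of_nontrivial v

/-- Numbering the vertices of an SLO*-tree along its ordering turns it into the graph of a spiral
parent function. -/
lemma exists_spiral_iso {V : Type*} [Fintype V] [DecidableEq V] {G : SimpleGraph V}
    (hG : IsSLOStarTree G) {n : ℕ} (hn : Fintype.card V = n) :
    ∃ p : ℕ → ℕ, IsSpiral n p ∧ Nonempty (G ≃g parentGraph n p) := by
  obtain ⟨hT, v₀, lt, ⟨hlt, hS1, hS2, hS3⟩, hS4⟩ := hG
  let _ : LinearOrder V := @linearOrderOfSTO V lt hlt _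
  have hlt' : ∀ v w : V, v < w ↔ lt v w := fun _ _ => Iff.rfl
  let e := monoEquivOfFin V hn
  have hmin : ∀ v, v₀ ≤ v := by
    intro v
    by_contra h
    have h1 := hS1 v v₀ (not_le.1 h)
    rw [SimpleGraph.dist_self, Nat.le_zero, hT.1.connected.dist_eq_zero_iff] at h1
    exact h h1.le
  have he0 : ∀ i : Fin n, e i = v₀ ↔ i.val = 0 := by
    intro i
    have hle : ∀ j, e.symm v₀ ≤ j := fun j => e.symm_apply_le.2 (hmin _)
    have hz : (e.symm v₀).val = 0 := Nat.le_zero.1 (hle ⟨0, by have := i.2; omega⟩)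
    constructor
    · rintro rfl; simpa using hz
    · intro h
      rw [← e.eq_symm_apply]
      exact Fin.ext (h.trans hz.symm)
  have hpar : ∀ v, ∃ u, v ≠ v₀ → G.Adj u v ∧ G.dist v₀ v = G.dist v₀ u + 1 := by
    intro v
    by_cases hv : v = v₀
    · exact ⟨v, fun h => absurd hv h⟩
    · obtain ⟨u, hu⟩ := exists_parent hT.1.connected hv
      exact ⟨u, fun _ => hu⟩
  choose par hpar using hpar
  have hparlt : ∀ v, v ≠ v₀ → par v < v := by
    intro v hv
    by_contra h
    rcases (not_lt.1 h).eq_or_lt with h | h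
    · exact (hpar v hv).1.ne h.symm
    · have := hS1 _ _ h
      have := (hpar v hv).2
      omega
  have hparmono : ∀ v w, v ≠ v₀ → w ≠ v₀ → v ≤ w → par v ≤ par w := by
    intro v w hv hw hvw
    by_contra h
    exact absurd (hS2 _ _ _ _ (not_le.1 h) (hpar w hw) (hpar v hv)) (not_lt.2 hvw)
  have hadj : ∀ u v, u < v → (G.Adj u v ↔ par v = u) := by
    intro u v huv
    have hv : v ≠ v₀ := fun h => absurd (hmin u) (not_le.2 (h ▸ huv))
    constructor
    · intro h
      refine parent_unique hT.1 (hpar v hv).1 h (hpar v hv).2 ?_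
      have h1 := hS1 u v huv
      rcases hT.1.dist_eq_dist_add_one_of_adj v₀ h with h2 | h2 <;> omega
    · intro h
      exact h ▸ (hpar v hv).1
  let p : ℕ → ℕ := fun w => if h : w < n then
    if w = 0 then 0 else (e.symm (par (e ⟨w, h⟩))).val else 0
  have hp : ∀ w : Fin n, w.val ≠ 0 → p w = (e.symm (par (e w))).val := by
    intro w hw
    simp [p, hw]
  have hlt : ∀ w, 0 < w → w < n → p w < w := by
    intro w h0 hw
    have h := hp ⟨w, hw⟩ h0.ne'
    simp only at h
    rw [h]
    have := hparlt (e ⟨w, hw⟩) (fun h => h0.ne' ((he0 _).1 h))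
    rw [← e.symm.lt_iff_lt, e.symm_apply_apply] at this
    exact this
  have hadj' : ∀ i j : Fin n, i < j → (G.Adj (e i) (e j) ↔ p j = i) := by
    intro i j hij
    have hij' : i.val < j.val := hij
    rw [hadj _ _ (e.lt_iff_lt.2 hij), hp j (by omega), ← Fin.ext_iff, OrderIso.symm_apply_eq]
  let iso : parentGraph n p ≃g G :=
    { toEquiv := e.toEquiv
      map_rel_iff' := by
        intro i j
        rw [parentGraph_adj]
        change G.Adj (e i) (e j) ↔ _
        rcases lt_trichotomy i j with h | rfl | h
        · have h' : i.val < j.val := h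
          rw [hadj' i j h]
          constructor
          · intro h1; exact Or.inl ⟨h', h1⟩
          · rintro (h1 | h1)
            · exact h1.2
            · omega
        · simp
        · have h' : j.val < i.val := h
          rw [SimpleGraph.adj_comm, hadj' j i h]
          constructor
          · intro h1; exact Or.inr ⟨h', h1⟩
          · rintro (h1 | h1)
            · omega
            · exact h1.2 }
  have hdeg : ∀ i, (parentGraph n p).degree i = G.degree (e i) := fun i => (iso.degree_eq i).symm
  refine ⟨p, ⟨by simp [p], hlt, ?_, ?_⟩, ⟨iso.symm⟩⟩
  · intro v w hvw hw
    by_cases hv0 : v = 0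
    · simp [p, hv0]
    · have h1 := hp ⟨v, by omega⟩ hv0
      have h2 := hp ⟨w, hw⟩ (show w ≠ 0 by omega)
      simp only at h1 h2
      rw [h1, h2]
      refine e.symm.monotone (hparmono _ _ (fun h => hv0 ((he0 _).1 h))
        (fun h => (show w ≠ 0 by omega) ((he0 _).1 h)) (e.monotone hvw))
  · intro v w hvw
    rw [hdeg, hdeg]
    rcases hvw.eq_or_lt with rfl | hvw
    · exact le_rfl
    · have hl : lt (e v) (e w) := e.lt_iff_lt.2 hvw
      have h3 := hS3 _ _ hl
      have h4 := hS4 _ _ hl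
      have h5 := one_le_degree hT (e v)
      have h6 := one_le_degree hT (e w)
      unfold IsBoundary at h3
      unfold IsInterior at h4
      rw [degKey_le_iff]
      omega

/-! ### Existence -/

/-- The spiral parent function with prescribed degrees `d 0, …, d (n - 1)`. The number of children
of each vertex is known, so `c i = ∑ j < i, (size of the fibre of j)` is the first number whose
parent is at least `i`, and the parent of `w` is the least `i` with `w < c (i + 1)`. -/
lemma exists_spiral {n : ℕ} (d : ℕ → ℕ) (hn : 0 < n) (hd1 : ∀ i, i < n → 1 ≤ d i) (hd0 : 2 ≤ d 0)
    (hsum : ∑ i ∈ range n, d i + 2 = 2 * n)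
    (hmono : ∀ i j, i ≤ j → j < n → degKey (d i) ≤ degKey (d j)) :
    ∃ p : ℕ → ℕ, IsSpiral n p ∧ ∀ i : Fin n, (parentGraph n p).degree i = d i := by
  let k : ℕ → ℕ := fun i => if i = 0 then d 0 + 1 else d i - 1
  let c : ℕ → ℕ := fun i => ∑ j ∈ range i, k j
  have hk : ∀ i, i < n → k i + 1 = d i + if i = 0 then 2 else 0 := by
    intro i hi
    have := hd1 i hi
    by_cases h : i = 0
    · simp [k, h]
    · simp only [k, h, if_false]; omega
  have hcmono : Monotone c := by
    refine monotone_nat_of_le_succ fun i => ?_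
    simp [c, sum_range_succ]
  have hcn : c n = n := by
    have h1 : c n + n = ∑ i ∈ range n, d i + 2 := by
      calc c n + n = ∑ i ∈ range n, (k i + 1) := by simp [c, sum_add_distrib]
        _ = ∑ i ∈ range n, (d i + if i = 0 then 2 else 0) :=
          sum_congr rfl fun i hi => hk i (mem_range.1 hi)
        _ = _ := by
          rw [sum_add_distrib, sum_ite_eq']
          simp [hn]
    omega
  -- The children of the vertices below `w` include `w`: either all of those vertices are interior
  -- and have a child each, or all children have been placed by then.
  have hcw : ∀ w, 0 < w → w < n → w < c w := by
    intro w h0 hw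
    by_cases hall : ∀ j, j < w → 2 ≤ d j
    · have : ∀ m, m < w → m + 1 < c (m + 1) := by
        intro m
        induction m with
        | zero => intro _; simp [c, k]; omega
        | succ m ih =>
          intro hm
          have h1 := ih (by omega)
          have h2 : c (m + 1 + 1) = c (m + 1) + k (m + 1) := sum_range_succ _ _
          have h3 := hall (m + 1) hm
          have h4 : k (m + 1) = d (m + 1) - 1 := by simp [k]
          omega
      have h := this (w - 1) (by omega)
      rwa [Nat.sub_add_cancel h0] at h
    · push Not at hall
      obtain ⟨j, hj, hdj⟩ := hall
      have hdj1 : d j = 1 := by have := hd1 j (by omega); omega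
      have : c n = c w := by
        refine (sum_subset (range_mono hw.le) fun i hi hi' => ?_).symm
        rw [mem_range] at hi hi'
        have h1 := degKey_le_iff.1 (hmono j i (by omega) hi)
        have h2 : d i = 1 := h1.resolve_right fun h => h.1 hdj1
        simp [k, h2, show i ≠ 0 by omega]
      omega
  have hex : ∀ w, w < n → ∃ i, w < c (i + 1) := by
    intro w hw
    exact ⟨n, by have := hcmono (Nat.le_succ n); simp only [Nat.succ_eq_add_one] at this; omega⟩
  let p : ℕ → ℕ := fun w => if h : w < n then Nat.find (hex w h) else n
  have hple : ∀ w i, w < n → (p w ≤ i ↔ w < c (i + 1)) := by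
    intro w i hw
    simp only [p, hw, dif_pos, Nat.find_le_iff]
    constructor
    · rintro ⟨m, hm, h⟩
      exact h.trans_le (hcmono (by omega))
    · intro h
      exact ⟨i, le_rfl, h⟩
  have hp0 : p 0 = 0 := Nat.le_zero.1 ((hple 0 0 hn).2 (by simp [c, k]))
  have hlt : ∀ w, 0 < w → w < n → p w < w := by
    intro w h0 hw
    have := (hple w (w - 1) hw).2 (by rw [Nat.sub_add_cancel h0]; exact hcw w h0 hw)
    omega
  have hfib : ∀ i : Fin n, #{j : Fin n | p j = i} = k i := by
    intro i
    have hci : c (i + 1) ≤ n := (hcmono i.2).trans hcn.le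
    have hck : c (i + 1) = c i + k i := sum_range_succ _ _
    have h1 : ({j : Fin n | p j = i} : Finset (Fin n)).map Fin.valEmbedding =
        Ico (c i) (c (i + 1)) := by
      ext j
      have hj : j < n → (p j = i ↔ c i ≤ j ∧ j < c (i + 1)) := by
        intro hj
        have h1 := hple j i hj
        rcases Nat.eq_zero_or_pos i.val with h0 | h0
        · have : c i = 0 := by simp [c, h0]
          omega
        · have h2 := hple j (i - 1) hj
          rw [Nat.sub_add_cancel h0] at h2
          omega
      simp only [mem_map, mem_filter, mem_univ, true_and, Fin.valEmbedding_apply, mem_Ico]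
      constructor
      · rintro ⟨a, ha, rfl⟩
        exact (hj a.2).1 ha
      · intro h
        exact ⟨⟨j, by omega⟩, (hj (by omega)).2 h, rfl⟩
    rw [← card_map, h1, Nat.card_Ico]
    omega
  have hdeg : ∀ i : Fin n, (parentGraph n p).degree i = d i := by
    intro i
    have h1 := degree_parentGraph hp0 hlt i
    rw [hfib i, hk i i.2] at h1
    omega
  refine ⟨p, ⟨hp0, hlt, ?_, ?_⟩, hdeg⟩
  · intro v w hvw hw
    have := (hple w (p w) hw).1 le_rfl
    exact (hple v (p w) (by omega)).2 (by omega)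
  · intro v w hvw
    rw [hdeg, hdeg]
    exact hmono _ _ hvw w.2

lemma degreeMultiset_iso {V W : Type*} [Fintype V] [DecidableEq V] [Fintype W] [DecidableEq W]
    {G : SimpleGraph V} {H : SimpleGraph W} (f : G ≃g H) :
    degreeMultiset G = degreeMultiset H := by
  unfold degreeMultiset
  rw [← Multiset.map_univ_val_equiv f.toEquiv, Multiset.map_map]
  exact Multiset.map_congr rfl fun v _ => (f.degree_eq v).symm

lemma exists_spiral_of_tree {n : ℕ} {G : SimpleGraph (Fin n)} (hG : IsTreeWithBoundary G) :
    ∃ p : ℕ → ℕ, IsSpiral n p ∧ IsTreeWithBoundary (parentGraph n p) ∧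
      degreeMultiset (parentGraph n p) = degreeMultiset G := by
  obtain ⟨u, hu⟩ := hG.2.1
  have hn : 0 < n := by have := u.2; omega
  let σ := Tuple.sort fun i => degKey (G.degree i)
  have hσ : Monotone fun i => degKey (G.degree (σ i)) :=
    Tuple.monotone_sort fun i => degKey (G.degree i)
  have hσs : ∀ v, G.degree (σ (σ.symm v)) = G.degree v := fun v => by rw [Equiv.apply_symm_apply]
  let d : ℕ → ℕ := fun i => if h : i < n then G.degree (σ ⟨i, h⟩) else 1
  have hd : ∀ i : Fin n, d i = G.degree (σ i) := fun i => by simp [d]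
  have hdegsum : ∑ v, G.degree v + 2 = 2 * n := by
    have h1 := hG.1.card_edgeFinset
    have h2 := G.sum_degrees_eq_twice_card_edges
    rw [Fintype.card_fin] at h1
    omega
  obtain ⟨p, hp, hdeg⟩ := exists_spiral (n := n) d hn
    (fun i hi => by rw [hd ⟨i, hi⟩]; exact one_le_degree hG _)
    (by
      have h1 : degKey (d 0) ≤ degKey (G.degree u) := by
        rw [hd ⟨0, hn⟩]
        exact (hσ (show (⟨0, hn⟩ : Fin n) ≤ σ.symm u from Nat.zero_le _)).trans_eq
          (congrArg degKey (hσs u))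
      have h2 : 1 ≤ d 0 := by rw [hd ⟨0, hn⟩]; exact one_le_degree hG _
      rw [degKey_le_iff] at h1
      unfold IsInterior at hu
      omega)
    (by
      rw [← Fin.sum_univ_eq_sum_range, ← hdegsum, ← Equiv.sum_comp σ fun v => G.degree v]
      simp only [hd])
    (fun i j hij hj => by
      rw [hd ⟨i, by omega⟩, hd ⟨j, hj⟩]
      exact hσ hij)
  have hdeg' : ∀ i, (parentGraph n p).degree i = G.degree (σ i) := fun i => (hdeg i).trans (hd i)
  refine ⟨p, hp, ⟨?_, ⟨σ.symm u, ?_⟩, ?_⟩, ?_⟩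
  · rw [SimpleGraph.isTree_iff_connected_and_card]
    refine ⟨parentGraph_connected hn hp.lt, ?_⟩
    have h1 := (parentGraph n p).sum_degrees_eq_twice_card_edges
    simp only [hdeg'] at h1
    rw [Equiv.sum_comp σ fun v => G.degree v] at h1
    rw [Nat.card_eq_fintype_card, Nat.card_eq_fintype_card, Fintype.card_fin,
      ← SimpleGraph.edgeFinset_card]
    omega
  · rwa [IsInterior, hdeg', hσs]
  · obtain ⟨b, hb⟩ := hG.2.2
    exact ⟨σ.symm b, by rwa [IsBoundary, hdeg', hσs]⟩
  · unfold degreeMultiset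
    conv_rhs => rw [← Multiset.map_univ_val_equiv σ, Multiset.map_map]
    exact Multiset.map_congr rfl fun v _ => hdeg' v

/-- **Lemma.** For every degree sequence `π` of a tree with boundary, the class
`T_π` contains an SLO*-tree, and any two SLO*-trees in `T_π` are isomorphic. -/
theorem exists_unique_SLOStarTree (π : Multiset ℕ)
    (hπ : ∃ G : SimpleGraph (Fin (Multiset.card π)),
      IsTreeWithBoundary G ∧ degreeMultiset G = π) :
    (∃ G : SimpleGraph (Fin (Multiset.card π)),
        IsTreeWithBoundary G ∧ degreeMultiset G = π ∧ IsSLOStarTree G) ∧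
    (∀ (V₁ V₂ : Type) [Fintype V₁] [DecidableEq V₁] [Fintype V₂] [DecidableEq V₂]
        (G₁ : SimpleGraph V₁) (G₂ : SimpleGraph V₂),
        IsTreeWithBoundary G₁ → degreeMultiset G₁ = π → IsSLOStarTree G₁ →
        IsTreeWithBoundary G₂ → degreeMultiset G₂ = π → IsSLOStarTree G₂ →
        Nonempty (G₁ ≃g G₂)) := by
  constructor
  · obtain ⟨G, hG, hdeg⟩ := hπ
    obtain ⟨p, hp, hT, hpd⟩ := exists_spiral_of_tree hG
    exact ⟨parentGraph _ p, hT, hpd.trans hdeg, hp.isSLOStarTree hT⟩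
  · intro V₁ V₂ _ _ _ _ G₁ G₂ _ hd₁ hS₁ _ hd₂ hS₂
    have hc₁ : Fintype.card V₁ = Multiset.card π := by
      rw [← hd₁]; simp [degreeMultiset]
    have hc₂ : Fintype.card V₂ = Multiset.card π := by
      rw [← hd₂]; simp [degreeMultiset]
    obtain ⟨p, hp, ⟨f⟩⟩ := exists_spiral_iso hS₁ hc₁
    obtain ⟨q, hq, ⟨g⟩⟩ := exists_spiral_iso hS₂ hc₂
    have h := hp.unique hq (by
      rw [← degreeMultiset_iso f, ← degreeMultiset_iso g, hd₁, hd₂])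
    exact ⟨(h ▸ f).trans g.symm⟩

end FK
end
end

section
/- (Switching) Let G(V,E) be a tree with boundary, and let (v₁,u₁), (v₂,u₂) ∈ E be edges such that u₂ lies on the geodesic path from v₁ to v₂ but u₁ does not. Let G'(V,E') be the graph obtained from G by replacing the edges (v₁,u₁) and (v₂,u₂) by the edges (v₁,v₂) and (u₁,u₂). Then G' is again a tree with boundary with the same degree sequence and the same set of boundary vertices as G. Moreover, for every real function f on V vanishing on the boundary vertices with f(v₁) ≥ f(u₂) and f(v₂) ≥ f(u₁), one has ⟨Δ(G')f, f⟩ ≤ ⟨Δ(G)f, f⟩ (equivalently R_{G'}(f) ≤ R_G(f) when f ≠ 0), and the inequality is strict if both inequalities f(v₁) ≥ f(u₂) and f(v₂) ≥ f(u₁) are strict. -/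
/-!
The degree sequence and the quadratic form are both sums over adjacent ordered pairs, and
switching changes such a sum only by the contributions of the four edges involved
(`sum_switchGraph`). Each of `v₁`, `u₁`, `v₂`, `u₂` loses one edge and gains one, so degrees are
preserved; for the quadratic form the change is
`(f v₁ - f v₂)² + (f u₁ - f u₂)² - (f v₁ - f u₁)² - (f v₂ - f u₂)²
  = -2 (f v₁ - f u₂) (f v₂ - f u₁)`.

For the tree property, a geodesic from `v₁` to `u₂` avoids both `u₁` and `v₂`, hence survives in the
switched graph. Together with the two new edges it connects the endpoints of each removed edge, so
the switched graph is connected; it has as many edges as `G` because the degrees agree, hence it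
is a tree. The degenerate case `v₁ = u₂`, where the two new edges are the two removed ones, is
covered by the same computation.
-/

/-!
Common definitions for Faber-Krahn type inequalities for trees
(Bıyıkoğlu–Leydold, "Faber-Krahn Type Inequalities for Trees").

A *tree (graph) with boundary* is a finite simple connected graph in which
boundary vertices are exactly the vertices of degree 1 and interior vertices
are the vertices of degree ≥ 2; both sets are required to be nonempty.
The Dirichlet operator is the Laplacian restricted to functions vanishing on
the boundary; `dirichletLambda` is its smallest eigenvalue.
-/

open Finset
open scoped Classical

noncomputable section

namespace FK

/-- The graph obtained from `G` by *switching*: the edges `(v₁,u₁)` and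
`(v₂,u₂)` are replaced by the edges `(v₁,v₂)` and `(u₁,u₂)`. -/
def switchGraph {V : Type*} (G : SimpleGraph V) (v₁ u₁ v₂ u₂ : V) : SimpleGraph V :=
  SimpleGraph.fromEdgeSet ((G.edgeSet \ {s(v₁, u₁), s(v₂, u₂)}) ∪ {s(v₁, v₂), s(u₁, u₂)})

section Switching

variable {V : Type*}

lemma switchGraph_adj (G : SimpleGraph V) (v₁ u₁ v₂ u₂ x y : V) :
    (switchGraph G v₁ u₁ v₂ u₂).Adj x y ↔
      ((G.Adj x y ∧ s(x, y) ≠ s(v₁, u₁) ∧ s(x, y) ≠ s(v₂, u₂)) ∨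
        s(x, y) = s(v₁, v₂) ∨ s(x, y) = s(u₁, u₂)) ∧ x ≠ y := by
  simp only [switchGraph, SimpleGraph.fromEdgeSet_adj, Set.mem_union, Set.mem_sdiff,
    SimpleGraph.mem_edgeSet, Set.mem_insert_iff, Set.mem_singleton_iff, not_or, ne_eq]

/-- The combinatorial content of the geodesic hypotheses: the new edges are not loops, and they are
not edges of `G` except in the degenerate case `v₁ = u₂`. -/
lemma switching_facts {G : SimpleGraph V} (hG : G.IsTree) {v₁ u₁ v₂ u₂ : V}
    (h₁ : G.Adj v₁ u₁) (h₂ : G.Adj v₂ u₂)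
    (hu₂ : G.dist v₁ u₂ + G.dist u₂ v₂ = G.dist v₁ v₂)
    (hu₁ : G.dist v₁ u₁ + G.dist u₁ v₂ ≠ G.dist v₁ v₂) :
    v₁ ≠ v₂ ∧ u₁ ≠ u₂ ∧ u₁ ≠ v₂ ∧
      (v₁ = u₂ ∨ ¬ G.Adj v₁ v₂ ∧ ¬ G.Adj u₁ u₂) := by
  have hd : G.dist u₂ v₂ = 1 := SimpleGraph.dist_eq_one_iff_adj.2 h₂.symm
  have hd₁ : G.dist v₁ u₁ = 1 := SimpleGraph.dist_eq_one_iff_adj.2 h₁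
  refine ⟨?_, ?_, ?_, ?_⟩
  · rintro rfl
    rw [SimpleGraph.dist_self] at hu₂
    omega
  · rintro rfl
    exact hu₁ hu₂
  · rintro rfl
    simp at hu₁
  · by_cases hvu : v₁ = u₂
    · exact Or.inl hvu
    · have hpos := hG.connected.pos_dist_of_ne hvu
      refine Or.inr ⟨fun h => ?_, fun h => ?_⟩
      · have := SimpleGraph.dist_eq_one_iff_adj.2 h
        omega
      · have t₁ := hG.connected.dist_triangle (u := u₁) (v := u₂) (w := v₂)
        have t₂ := hG.connected.dist_triangle (u := v₁) (v := u₁) (w := v₂)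
        have h' := SimpleGraph.dist_eq_one_iff_adj.2 h
        -- `v₁` is at different distances from the adjacent vertices `u₁` and `u₂`, so
        -- `G.dist v₁ u₂ ≥ 2`, and then `u₁` would lie on the geodesic.
        have hne := hG.dist_ne_of_adj v₁ h
        omega

/-- Adding the new edges repairs every removed edge of `G`. -/
lemma switchGraph_connected {G : SimpleGraph V} (hG : G.IsTree) {v₁ u₁ v₂ u₂ : V}
    (h₁ : G.Adj v₁ u₁) (h₂ : G.Adj v₂ u₂)
    (hu₂ : G.dist v₁ u₂ + G.dist u₂ v₂ = G.dist v₁ v₂)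
    (hu₁ : G.dist v₁ u₁ + G.dist u₁ v₂ ≠ G.dist v₁ v₂) :
    (switchGraph G v₁ u₁ v₂ u₂).Connected := by
  obtain ⟨hv, hu, -, -⟩ := switching_facts hG h₁ h₂ hu₂ hu₁
  have hd : G.dist u₂ v₂ = 1 := SimpleGraph.dist_eq_one_iff_adj.2 h₂.symm
  have hconn := hG.connected
  have e₁ : (switchGraph G v₁ u₁ v₂ u₂).Reachable v₁ v₂ :=
    SimpleGraph.Adj.reachable (by simp [switchGraph_adj, hv])
  have e₂ : (switchGraph G v₁ u₁ v₂ u₂).Reachable u₁ u₂ :=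
    SimpleGraph.Adj.reachable (by simp [switchGraph_adj, hu])
  have hp : (switchGraph G v₁ u₁ v₂ u₂).Reachable v₁ u₂ := by
    obtain ⟨p, hlen⟩ := hconn.exists_walk_length_eq_dist v₁ u₂
    have hsupp : ∀ x ∈ p.support, G.dist v₁ x + G.dist x u₂ ≤ G.dist v₁ u₂ := by
      intro x hx
      rw [← hlen, ← congrArg SimpleGraph.Walk.length (p.take_spec hx),
        SimpleGraph.Walk.length_append]
      exact add_le_add (SimpleGraph.dist_le _) (SimpleGraph.dist_le _)
    have hu₁p : u₁ ∉ p.support := by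
      intro hx
      have := hsupp _ hx
      have t₁ := hconn.dist_triangle (u := u₁) (v := u₂) (w := v₂)
      have t₂ := hconn.dist_triangle (u := v₁) (v := u₁) (w := v₂)
      omega
    have hv₂p : v₂ ∉ p.support := by
      intro hx
      have := hsupp _ hx
      omega
    refine ⟨p.transfer _ ?_⟩
    intro e he
    induction e using Sym2.ind with
    | _ x y =>
      have hadj : G.Adj x y := p.adj_of_mem_edges he
      rw [SimpleGraph.mem_edgeSet, switchGraph_adj]
      refine ⟨Or.inl ⟨hadj, fun h => ?_, fun h => ?_⟩, hadj.ne⟩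
      · rw [h] at he
        exact hu₁p (p.snd_mem_support_of_mem_edges he)
      · rw [h] at he
        exact hv₂p (p.fst_mem_support_of_mem_edges he)
  have r₁ : (switchGraph G v₁ u₁ v₂ u₂).Reachable v₁ u₁ := hp.trans e₂.symm
  have r₂ : (switchGraph G v₁ u₁ v₂ u₂).Reachable v₂ u₂ := e₁.symm.trans hp
  have hstep : ∀ x y, G.Adj x y → (switchGraph G v₁ u₁ v₂ u₂).Reachable x y := by
    intro x y hxy
    by_cases c₁ : s(x, y) = s(v₁, u₁)
    · rcases Sym2.eq_iff.1 c₁ with ⟨rfl, rfl⟩ | ⟨rfl, rfl⟩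
      exacts [r₁, r₁.symm]
    by_cases c₂ : s(x, y) = s(v₂, u₂)
    · rcases Sym2.eq_iff.1 c₂ with ⟨rfl, rfl⟩ | ⟨rfl, rfl⟩
      exacts [r₂, r₂.symm]
    exact SimpleGraph.Adj.reachable
      ((switchGraph_adj _ _ _ _ _ _ _).2 ⟨Or.inl ⟨hxy, c₁, c₂⟩, hxy.ne⟩)
  have : Nonempty V := ⟨v₁⟩
  refine ⟨fun x y => ?_⟩
  obtain ⟨w⟩ := hconn x y
  induction w with
  | nil => exact SimpleGraph.Reachable.refl _
  | cons h _ ih => exact (hstep _ _ h).trans ih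

/-- A version of `Finset.sum_ite_eq'` for the classical decidability instance, which is the one
occurring in `sum_switchGraph`. -/
lemma sum_point [Fintype V] (a : V) (c : ℝ) : ∑ x, (if x = a then c else 0) = c := by
  simp

lemma sum_edge [Fintype V] {a b : V} (hab : a ≠ b) (F : V → V → ℝ) (x : V) :
    ∑ y, (if s(x, y) = s(a, b) then F x y else 0) =
      (if x = a then F a b else 0) + (if x = b then F b a else 0) := by
  have h : ∀ y, (if s(x, y) = s(a, b) then F x y else 0) =
      (if y = b then (if x = a then F a b else 0) else 0) +
        (if y = a then (if x = b then F b a else 0) else 0) := by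
    intro y
    simp only [Sym2.eq_iff]
    grind
  simp only [h, Finset.sum_add_distrib, Finset.sum_ite_eq', Finset.mem_univ, if_true]

/-- The sum of `F x` over the neighbours of `x` changes under switching only by the terms belonging
to the four edges involved. -/
lemma sum_switchGraph [Fintype V] {G : SimpleGraph V} (hG : G.IsTree) {v₁ u₁ v₂ u₂ : V}
    (h₁ : G.Adj v₁ u₁) (h₂ : G.Adj v₂ u₂)
    (hu₂ : G.dist v₁ u₂ + G.dist u₂ v₂ = G.dist v₁ v₂)
    (hu₁ : G.dist v₁ u₁ + G.dist u₁ v₂ ≠ G.dist v₁ v₂) (F : V → V → ℝ) (x : V) :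
    ∑ y ∈ (switchGraph G v₁ u₁ v₂ u₂).neighborFinset x, F x y =
      ∑ y ∈ G.neighborFinset x, F x y
      - ((if x = v₁ then F v₁ u₁ else 0) + (if x = u₁ then F u₁ v₁ else 0))
      - ((if x = v₂ then F v₂ u₂ else 0) + (if x = u₂ then F u₂ v₂ else 0))
      + ((if x = v₁ then F v₁ v₂ else 0) + (if x = v₂ then F v₂ v₁ else 0))
      + ((if x = u₁ then F u₁ u₂ else 0) + (if x = u₂ then F u₂ u₁ else 0)) := by
  obtain ⟨hv, hu, huv, hcase⟩ := switching_facts hG h₁ h₂ hu₂ hu₁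
  have hn : ∀ H : SimpleGraph V, ∑ y ∈ H.neighborFinset x, F x y =
      ∑ y, if H.Adj x y then F x y else 0 := by
    intro H
    rw [← Finset.sum_filter]
    exact Finset.sum_congr (by ext; simp) fun _ _ => rfl
  rw [hn, hn, ← sum_edge h₁.ne, ← sum_edge h₂.ne, ← sum_edge hv, ← sum_edge hu,
    ← Finset.sum_sub_distrib, ← Finset.sum_sub_distrib, ← Finset.sum_add_distrib,
    ← Finset.sum_add_distrib]
  refine Finset.sum_congr rfl fun y _ => ?_
  have hv₁u₁ := h₁.ne
  have hv₂u₂ := h₂.ne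
  have a₁ : s(x, y) = s(v₁, u₁) → G.Adj x y := fun h => by
    rw [← SimpleGraph.mem_edgeSet, h]; exact h₁
  have a₂ : s(x, y) = s(v₂, u₂) → G.Adj x y := fun h => by
    rw [← SimpleGraph.mem_edgeSet, h]; exact h₂
  have n₁₂ : s(v₁, u₁) ≠ s(v₂, u₂) := by simp only [ne_eq, Sym2.eq_iff]; grind
  have n₃₄ : s(v₁, v₂) ≠ s(u₁, u₂) := by simp only [ne_eq, Sym2.eq_iff]; grind
  have hloop₃ : s(x, y) = s(v₁, v₂) → x ≠ y := by simp only [Sym2.eq_iff]; grind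
  have hloop₄ : s(x, y) = s(u₁, u₂) → x ≠ y := by simp only [Sym2.eq_iff]; grind
  have hloop : G.Adj x y → x ≠ y := fun h => h.ne
  simp only [switchGraph_adj]
  rcases hcase with rfl | ⟨a₃, a₄⟩
  · -- The switched graph is `G` itself: the new edges are the removed ones.
    rw [Sym2.eq_swap (a := v₁) (b := v₂), Sym2.eq_swap (a := u₁) (b := v₁)] at *
    grind
  · have a₃' : s(x, y) = s(v₁, v₂) → ¬ G.Adj x y := fun h => by
      rw [← SimpleGraph.mem_edgeSet, h]; exact a₃
    have a₄' : s(x, y) = s(u₁, u₂) → ¬ G.Adj x y := fun h => by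
      rw [← SimpleGraph.mem_edgeSet, h]; exact a₄
    grind

end Switching

/-- **Lemma (Switching).** Let `G` be a tree with boundary, `(v₁,u₁)` and
`(v₂,u₂)` edges such that `u₂` lies on the geodesic path from `v₁` to `v₂` but
`u₁` does not. Then the switched graph `G'` is again a tree with boundary with
the same degree sequence and the same boundary vertices, and for every function
`f` vanishing on the boundary with `f v₁ ≥ f u₂` and `f v₂ ≥ f u₁` one has
`⟨Δ(G')f, f⟩ ≤ ⟨Δ(G)f, f⟩`, strictly if both inequalities are strict. -/
theorem switching {V : Type*} [Fintype V] [DecidableEq V]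
    (G : SimpleGraph V) (hG : IsTreeWithBoundary G) (v₁ u₁ v₂ u₂ : V)
    (h₁ : G.Adj v₁ u₁) (h₂ : G.Adj v₂ u₂)
    (hu₂ : G.dist v₁ u₂ + G.dist u₂ v₂ = G.dist v₁ v₂)
    (hu₁ : G.dist v₁ u₁ + G.dist u₁ v₂ ≠ G.dist v₁ v₂) :
    IsTreeWithBoundary (switchGraph G v₁ u₁ v₂ u₂) ∧
    degreeMultiset (switchGraph G v₁ u₁ v₂ u₂) = degreeMultiset G ∧
    (∀ v, IsBoundary (switchGraph G v₁ u₁ v₂ u₂) v ↔ IsBoundary G v) ∧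
    ∀ f : V → ℝ, (∀ v, IsBoundary G v → f v = 0) →
      f u₂ ≤ f v₁ → f u₁ ≤ f v₂ →
      (quadForm (switchGraph G v₁ u₁ v₂ u₂) f ≤ quadForm G f ∧
        (f u₂ < f v₁ → f u₁ < f v₂ →
          quadForm (switchGraph G v₁ u₁ v₂ u₂) f < quadForm G f)) := by
  obtain ⟨hT, ⟨a, ha⟩, ⟨b, hb⟩⟩ := hG
  have hdeg : ∀ v, (switchGraph G v₁ u₁ v₂ u₂).degree v = G.degree v := by
    intro v
    have h := sum_switchGraph hT h₁ h₂ hu₂ hu₁ (fun _ _ => 1) v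
    simp only [Finset.sum_const, SimpleGraph.card_neighborFinset_eq_degree, nsmul_eq_mul,
      mul_one] at h
    have h' : ((switchGraph G v₁ u₁ v₂ u₂).degree v : ℝ) = G.degree v := by linarith
    exact_mod_cast h'
  have hcard : Nat.card (switchGraph G v₁ u₁ v₂ u₂).edgeSet = Nat.card G.edgeSet := by
    have s₁ := (switchGraph G v₁ u₁ v₂ u₂).sum_degrees_eq_twice_card_edges
    have s₂ := G.sum_degrees_eq_twice_card_edges
    simp only [hdeg] at s₁
    rw [Nat.card_eq_fintype_card, Nat.card_eq_fintype_card, ← SimpleGraph.edgeFinset_card,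
      ← SimpleGraph.edgeFinset_card]
    omega
  refine ⟨⟨?_, ⟨a, ?_⟩, ⟨b, ?_⟩⟩, ?_, ?_, ?_⟩
  · rw [SimpleGraph.isTree_iff_connected_and_card, hcard]
    exact ⟨switchGraph_connected hT h₁ h₂ hu₂ hu₁,
      (SimpleGraph.isTree_iff_connected_and_card.1 hT).2⟩
  · unfold IsInterior
    rw [hdeg]
    exact ha
  · unfold IsBoundary
    rw [hdeg]
    exact hb
  · simp only [degreeMultiset, hdeg]
  · intro v
    simp only [IsBoundary, hdeg]
  · intro f _ hf₁ hf₂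
    have hq : quadForm (switchGraph G v₁ u₁ v₂ u₂) f =
        quadForm G f - 2 * ((f v₁ - f u₂) * (f v₂ - f u₁)) := by
      unfold quadForm
      rw [Finset.sum_congr rfl fun x _ =>
        sum_switchGraph hT h₁ h₂ hu₂ hu₁ (fun p q => (f p - f q) ^ 2) x]
      simp only [Finset.sum_add_distrib, Finset.sum_sub_distrib, sum_point]
      ring
    rw [hq]
    refine ⟨?_, fun g₁ g₂ => ?_⟩
    · have := mul_nonneg (sub_nonneg.2 hf₁) (sub_nonneg.2 hf₂)
      linarith
    · have := mul_pos (sub_pos.2 g₁) (sub_pos.2 g₂)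
      linarith

end FK
end
end

section
/- Let G(V,E) be a tree with boundary with degree sequence π. Then there exists an SLO-tree G'(V,E') in the class T_π with λ(G') ≤ λ(G). Furthermore, if G has the Faber-Krahn property in T_π, then G itself admits an SLO-ordering ≺ of its vertices, and if f is a non-negative eigenfunction to λ(G) (extended by 0 on the boundary) then v ≺ w implies f(v) ≥ f(w). -/
/-!
The class of trees with a given degree sequence on a fixed vertex set is finite, so `λ` has a
minimizer in it, and the first half of the theorem follows from the second.

Let `G` be a minimizer with non-negative eigenfunction `f`; it is positive on the interior, and
unique up to scaling (`IsDirichletEigenpair.ne_zero_of_nonneg`,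
`IsDirichletEigenpair.proportional`). For a path `a₁ n₁ ⋯ n₂ a₂` in `G` with `n₁ ≠ n₂`, replacing
the edges `a₁n₁`, `a₂n₂` by `a₁n₂`, `a₂n₁` yields a tree with the same degrees, and changes the
quadratic form of `f` by `-2 (f a₁ - f a₂) (f n₂ - f n₁)`. By minimality this change cannot be
negative, and if it vanishes then `f` is an eigenfunction of the new tree as well, so comparing the
eigenvalue equations at `n₁` and at `a₁` gives `f a₁ = f a₂`, and `f n₁ = f n₂` if `a₁` is interior
(`Switchable.eq_of_nonneg`). Consequently `f n₁ ≤ f n₂` implies `f a₁ ≤ f a₂`, strictly if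
`f n₁ < f n₂` and `a₁` is interior.

Root `G` at a maximum of `f`. An ancestor `a` of `b` has `f a ≥ f b`: otherwise the strict
inequality passes to the parent of `a` and a child of `b`, and eventually contradicts the maximality
at the root (`RootedMin.le_of_ancestor`). By induction on the height, the values of `f` on each level
dominate those on the next one. Now order the vertices breadth-first, with siblings ordered by
decreasing `f`. Conditions (S1) and (S2) are built in, and the switching inequality shows, level by
level, that `f` is non-increasing along the ordering (`RootedMin.exists_order`). As `f` is positive
exactly on the interior, (S3) follows.
-/

/-!
Common definitions for Faber-Krahn type inequalities for trees
(Bıyıkoğlu–Leydold, "Faber-Krahn Type Inequalities for Trees").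

A *tree (graph) with boundary* is a finite simple connected graph in which
boundary vertices are exactly the vertices of degree 1 and interior vertices
are the vertices of degree ≥ 2; both sets are required to be nonempty.
The Dirichlet operator is the Laplacian restricted to functions vanishing on
the boundary; `dirichletLambda` is its smallest eigenvalue.
-/

open Finset
open scoped Classical

noncomputable section

namespace FK

open SimpleGraph

/-! ### Distances in trees and edge switching -/

section Tree

variable {V : Type*}

/-- If the edge `pw` of a tree separates `x` (on the side of `p`) from `y` (on the side of `w`),
then the path from `x` to `y` uses that edge. -/
lemma dist_eq_of_separated {G : SimpleGraph V} (hG : G.IsTree) {p w x y : V} (h : G.Adj p w)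
    (hx : G.dist x w = G.dist x p + 1) (hy : G.dist y p = G.dist y w + 1) :
    G.dist x y = G.dist x p + 1 + G.dist w y := by
  obtain ⟨P, hP, hPl⟩ := hG.connected.exists_path_of_dist x p
  obtain ⟨Q, hQ, hQl⟩ := hG.connected.exists_path_of_dist w y
  have key : (P.append (Walk.cons h Q)).IsPath := by
    rw [Walk.isPath_def, Walk.support_append, Walk.support_cons, List.tail_cons,
      List.nodup_append]
    refine ⟨hP.support_nodup, hQ.support_nodup, ?_⟩
    rintro a ha b hb rfl
    -- a common vertex `a` would be strictly closer to `p` than to `w`, and vice versa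
    have h1 : G.dist x a + G.dist a p ≤ G.dist x p := by
      rw [← hPl, ← P.take_spec ha, Walk.length_append]
      exact add_le_add (dist_le _) (dist_le _)
    have h2 : G.dist w a + G.dist a y ≤ G.dist w y := by
      rw [← hQl, ← Q.take_spec hb, Walk.length_append]
      exact add_le_add (dist_le _) (dist_le _)
    have h3 := hG.connected.dist_triangle (u := x) (v := a) (w := w)
    have h4 := hG.connected.dist_triangle (u := y) (v := a) (w := p)
    have h5 := G.dist_comm (u := y) (v := a)
    have h6 := G.dist_comm (u := w) (v := a)
    have h7 := G.dist_comm (u := w) (v := y)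
    omega
  obtain ⟨R, hR, hRl⟩ := hG.connected.exists_path_of_dist x y
  have := (hG.existsUnique_path x y).unique hR key
  rw [← hRl, this, Walk.length_append, Walk.length_cons, hPl, hQl]
  omega

/-- The graph obtained from `G` by replacing the edges `a₁n₁`, `a₂n₂` by `a₁n₂`, `a₂n₁`. -/
def switch (G : SimpleGraph V) (a₁ n₁ n₂ a₂ : V) : SimpleGraph V :=
  G.deleteEdges {s(a₁, n₁), s(a₂, n₂)} ⊔ edge a₁ n₂ ⊔ edge a₂ n₁

/-- `a₁ n₁ ⋯ n₂ a₂` is a path of the tree `G` with `n₁ ≠ n₂`; expressed through distances, which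
say that neither `a₁` nor `a₂` lies on the path from `n₁` to `n₂`. -/
structure Switchable (G : SimpleGraph V) (a₁ n₁ n₂ a₂ : V) : Prop where
  adj₁ : G.Adj a₁ n₁
  adj₂ : G.Adj a₂ n₂
  ne : n₁ ≠ n₂
  dist₁ : G.dist n₁ n₂ < G.dist a₁ n₂
  dist₂ : G.dist n₁ n₂ < G.dist a₂ n₁

namespace Switchable

variable {G : SimpleGraph V} {a₁ n₁ n₂ a₂ : V}

lemma symm (h : Switchable G a₁ n₁ n₂ a₂) : Switchable G a₂ n₂ n₁ a₁ :=
  ⟨h.adj₂, h.adj₁, h.ne.symm, G.dist_comm ▸ h.dist₂, G.dist_comm ▸ h.dist₁⟩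

lemma pos (hG : G.IsTree) (h : Switchable G a₁ n₁ n₂ a₂) : 0 < G.dist n₁ n₂ :=
  hG.connected.pos_dist_of_ne h.ne

lemma not_adj (hG : G.IsTree) (h : Switchable G a₁ n₁ n₂ a₂) : ¬ G.Adj a₁ n₂ := by
  intro h'
  have := dist_eq_one_iff_adj.2 h'
  have := h.dist₁
  have := h.pos hG
  omega

lemma ne_an (h : Switchable G a₁ n₁ n₂ a₂) : a₁ ≠ n₂ := by
  rintro rfl
  have := h.dist₁
  simp at this

lemma ne_aa (hG : G.IsTree) (h : Switchable G a₁ n₁ n₂ a₂) : a₁ ≠ a₂ := by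
  rintro rfl
  exact h.not_adj hG h.adj₂

/-- The neighbour of `n₁` on the path towards `n₂`. -/
lemma exists_nbr (hG : G.IsTree) (h : Switchable G a₁ n₁ n₂ a₂) : ∃ x, x ≠ a₁ ∧ G.Adj n₁ x := by
  obtain ⟨P, hP, hPl⟩ := hG.connected.exists_path_of_dist n₁ n₂
  cases P with
  | nil => exact absurd rfl h.ne
  | cons h' Q =>
    refine ⟨_, ?_, h'⟩
    rintro rfl
    have := dist_le Q
    have := h.dist₁
    simp at hPl
    omega

lemma connected (hG : G.IsTree) (h : Switchable G a₁ n₁ n₂ a₂) :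
    (switch G a₁ n₁ n₂ a₂).Connected := by
  have hadj : ∀ {x y}, (switch G a₁ n₁ n₂ a₂).Adj x y ↔
      (G.Adj x y ∧ s(x, y) ≠ s(a₁, n₁) ∧ s(x, y) ≠ s(a₂, n₂)) ∨
      (s(a₁, n₂) = s(x, y) ∧ x ≠ y) ∨ (s(a₂, n₁) = s(x, y) ∧ x ≠ y) := by
    intro x y
    simp only [switch, sup_adj, deleteEdges_adj, edge_adj, Set.mem_insert_iff,
      Set.mem_singleton_iff, Sym2.eq_iff, not_or, or_assoc, ne_eq]
    grind
  obtain ⟨P, hP, hPl⟩ := hG.connected.exists_path_of_dist n₁ n₂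
  have ha : ∀ x ∈ P.support, x ≠ a₁ ∧ x ≠ a₂ := by
    intro x hx
    have h1 : G.dist n₁ x + G.dist x n₂ ≤ G.dist n₁ n₂ := by
      rw [← hPl, ← P.take_spec hx, Walk.length_append]
      exact add_le_add (dist_le _) (dist_le _)
    have := h.dist₁
    have := h.dist₂
    constructor
    · rintro rfl
      omega
    · rintro rfl
      rw [G.dist_comm (u := n₁)] at h1
      omega
  have hn : (switch G a₁ n₁ n₂ a₂).Reachable n₁ n₂ := by
    refine ⟨P.transfer _ ?_⟩
    intro e he
    induction e with | _ x y =>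
    have hx := ha x (P.fst_mem_support_of_mem_edges he)
    have hy := ha y (P.snd_mem_support_of_mem_edges he)
    rw [mem_edgeSet, hadj]
    refine Or.inl ⟨P.adj_of_mem_edges he, ?_, ?_⟩ <;> rw [Ne, Sym2.eq_iff] <;> tauto
  have e1 : (switch G a₁ n₁ n₂ a₂).Reachable a₁ n₂ :=
    (hadj.2 (Or.inr (Or.inl ⟨rfl, h.ne_an⟩))).reachable
  have e2 : (switch G a₁ n₁ n₂ a₂).Reachable a₂ n₁ :=
    (hadj.2 (Or.inr (Or.inr ⟨rfl, h.symm.ne_an⟩))).reachable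
  have hstep : ∀ x y, G.Adj x y → (switch G a₁ n₁ n₂ a₂).Reachable x y := by
    intro x y hxy
    by_cases h1 : s(x, y) = s(a₁, n₁)
    · rcases Sym2.eq_iff.1 h1 with ⟨rfl, rfl⟩ | ⟨rfl, rfl⟩
      · exact e1.trans hn.symm
      · exact (e1.trans hn.symm).symm
    by_cases h2 : s(x, y) = s(a₂, n₂)
    · rcases Sym2.eq_iff.1 h2 with ⟨rfl, rfl⟩ | ⟨rfl, rfl⟩
      · exact e2.trans hn
      · exact (e2.trans hn).symm
    exact (hadj.2 (Or.inl ⟨hxy, h1, h2⟩)).reachable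
  have : Nonempty V := ⟨a₁⟩
  refine ⟨fun x y => ?_⟩
  obtain ⟨W⟩ := hG.connected x y
  induction W with
  | nil => exact Reachable.refl _
  | cons h' _ ih => exact (hstep _ _ h').trans ih

variable [Fintype V]

/-- The change of neighbour sums under a switch. It yields at once the invariance of the degrees
and the changes of the Laplacian and of the quadratic form. -/
lemma sum_nbr (hG : G.IsTree) (h : Switchable G a₁ n₁ n₂ a₂) (g : V → ℝ) (v : V) :
    ∑ w ∈ (switch G a₁ n₁ n₂ a₂).neighborFinset v, g w = ∑ w ∈ G.neighborFinset v, g w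
      + (if v = a₁ then g n₂ - g n₁ else 0) + (if v = n₁ then g a₂ - g a₁ else 0)
      + (if v = a₂ then g n₁ - g n₂ else 0) + (if v = n₂ then g a₁ - g a₂ else 0) := by
  have d1 := h.ne_an
  have d2 := h.symm.ne_an
  have d3 := h.ne_aa hG
  have d4 := h.ne
  have d5 := h.adj₁.ne
  have d6 := h.adj₂.ne
  have b1 := h.not_adj hG
  have b2 := h.symm.not_adj hG
  have c1 := h.adj₁
  have c2 := h.adj₂
  have hsum : ∀ H : SimpleGraph V, ∑ w ∈ H.neighborFinset v, g w =
      ∑ w, if H.Adj v w then g w else 0 := by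
    intro H
    rw [← Finset.sum_filter]
    congr 1
    ext w
    simp
  have hdiff : ∀ x y : V, g x - g y =
      ∑ w, ((if w = x then g w else 0) - (if w = y then g w else 0)) := by
    intro x y
    simp
  have hif : ∀ x y z : V, (if v = z then g x - g y else 0) =
      ∑ w, if v = z then ((if w = x then g w else 0) - (if w = y then g w else 0)) else 0 := by
    intro x y z
    split_ifs
    · exact hdiff x y
    · simp
  rw [hsum, hsum, hif, hif, hif, hif, ← Finset.sum_add_distrib, ← Finset.sum_add_distrib,
    ← Finset.sum_add_distrib, ← Finset.sum_add_distrib]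
  refine Finset.sum_congr rfl fun w _ => ?_
  have hadj : (switch G a₁ n₁ n₂ a₂).Adj v w ↔
      (G.Adj v w ∧ ¬ ((v = a₁ ∧ w = n₁ ∨ v = n₁ ∧ w = a₁) ∨ (v = a₂ ∧ w = n₂ ∨ v = n₂ ∧ w = a₂))) ∨
      (v = a₁ ∧ w = n₂ ∨ v = n₂ ∧ w = a₁) ∨ (v = a₂ ∧ w = n₁ ∨ v = n₁ ∧ w = a₂) := by
    simp only [switch, sup_adj, deleteEdges_adj, edge_adj, Set.mem_insert_iff,
      Set.mem_singleton_iff, Sym2.eq_iff]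
    grind
  have c1' := c1.symm
  have c2' := c2.symm
  have b1' : ¬ G.Adj n₂ a₁ := fun h => b1 h.symm
  have b2' : ¬ G.Adj n₁ a₂ := fun h => b2 h.symm
  by_cases v1 : v = a₁
  · subst v1; grind
  by_cases v2 : v = n₁
  · subst v2; grind
  by_cases v3 : v = a₂
  · subst v3; grind
  by_cases v4 : v = n₂
  · subst v4; grind
  simp [hadj, v1, v2, v3, v4]

lemma degree_eq (hG : G.IsTree) (h : Switchable G a₁ n₁ n₂ a₂) (v : V) :
    (switch G a₁ n₁ n₂ a₂).degree v = G.degree v := by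
  have := h.sum_nbr hG (fun _ => 1) v
  simpa using this

lemma isTree (hG : G.IsTree) (h : Switchable G a₁ n₁ n₂ a₂) :
    (switch G a₁ n₁ n₂ a₂).IsTree := by
  rw [isTree_iff_connected_and_card] at hG ⊢
  have hG' := isTree_iff_connected_and_card.2 hG
  refine ⟨h.connected hG', ?_⟩
  rw [← hG.2]
  have h1 := sum_degrees_eq_twice_card_edges G
  have h2 := sum_degrees_eq_twice_card_edges (switch G a₁ n₁ n₂ a₂)
  simp only [h.degree_eq hG'] at h2
  rw [h1] at h2
  simp only [Nat.card_eq_fintype_card, ← edgeFinset_card]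
  omega

lemma degreeMultiset_eq (hG : G.IsTree) (h : Switchable G a₁ n₁ n₂ a₂) :
    degreeMultiset (switch G a₁ n₁ n₂ a₂) = degreeMultiset G := by
  simp only [degreeMultiset, h.degree_eq hG]

lemma isBoundary_iff (hG : G.IsTree) (h : Switchable G a₁ n₁ n₂ a₂) (v : V) :
    IsBoundary (switch G a₁ n₁ n₂ a₂) v ↔ IsBoundary G v := by
  rw [IsBoundary, IsBoundary, h.degree_eq hG]

lemma isInterior_iff (hG : G.IsTree) (h : Switchable G a₁ n₁ n₂ a₂) (v : V) :
    IsInterior (switch G a₁ n₁ n₂ a₂) v ↔ IsInterior G v := by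
  rw [IsInterior, IsInterior, h.degree_eq hG]

lemma isTreeWithBoundary (hG : IsTreeWithBoundary G) (h : Switchable G a₁ n₁ n₂ a₂) :
    IsTreeWithBoundary (switch G a₁ n₁ n₂ a₂) := by
  obtain ⟨hT, ⟨v, hv⟩, ⟨w, hw⟩⟩ := hG
  exact ⟨h.isTree hT, ⟨v, (h.isInterior_iff hT v).2 hv⟩, ⟨w, (h.isBoundary_iff hT w).2 hw⟩⟩

lemma lapApply_eq (hG : G.IsTree) (h : Switchable G a₁ n₁ n₂ a₂) (g : V → ℝ) (v : V) :
    lapApply (switch G a₁ n₁ n₂ a₂) g v = lapApply G g v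
      - ((if v = a₁ then g n₂ - g n₁ else 0) + (if v = n₁ then g a₂ - g a₁ else 0)
      + (if v = a₂ then g n₁ - g n₂ else 0) + (if v = n₂ then g a₁ - g a₂ else 0)) := by
  rw [lapApply, lapApply, h.degree_eq hG, h.sum_nbr hG]
  ring

end Switchable

end Tree

end FK

namespace FK

open SimpleGraph

/-! ### The first Dirichlet eigenvalue -/

section Spectral

variable {V : Type*} [Fintype V]

/-- A function on the vertices that vanishes on the boundary. -/
def VanishesOnBoundary (G : SimpleGraph V) (f : V → ℝ) : Prop := ∀ v, IsBoundary G v → f v = 0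

lemma sum_nbr_eq (G : SimpleGraph V) (g : V → ℝ) (v : V) :
    ∑ w ∈ G.neighborFinset v, g w = ∑ w, if G.Adj v w then g w else 0 := by
  rw [← Finset.sum_filter]
  congr 1
  ext w
  simp

lemma lapApply_eq_sum (G : SimpleGraph V) (f : V → ℝ) (v : V) :
    lapApply G f v = ∑ w ∈ G.neighborFinset v, (f v - f w) := by
  simp [lapApply, Finset.sum_sub_distrib]

lemma quadForm_eq (G : SimpleGraph V) (f : V → ℝ) :
    quadForm G f = ∑ v, f v * lapApply G f v := by
  have h1 : ∑ v, f v * lapApply G f v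
      = ∑ v, ∑ w, if G.Adj v w then f v * (f v - f w) else 0 := by
    refine Finset.sum_congr rfl fun v _ => ?_
    rw [lapApply_eq_sum, sum_nbr_eq, Finset.mul_sum]
    refine Finset.sum_congr rfl fun w _ => ?_
    split_ifs <;> simp
  have h2 : ∑ v, f v * lapApply G f v
      = ∑ v, ∑ w, if G.Adj v w then f w * (f w - f v) else 0 := by
    rw [h1, Finset.sum_comm]
    refine Finset.sum_congr rfl fun v _ => Finset.sum_congr rfl fun w _ => ?_
    simp [G.adj_comm]
  have h3 : ∑ v, ∑ w ∈ G.neighborFinset v, (f v - f w) ^ 2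
      = ∑ v, f v * lapApply G f v + ∑ v, f v * lapApply G f v := by
    nth_rw 1 [h1]
    rw [h2, ← Finset.sum_add_distrib]
    refine Finset.sum_congr rfl fun v _ => ?_
    rw [sum_nbr_eq, ← Finset.sum_add_distrib]
    refine Finset.sum_congr rfl fun w _ => ?_
    split_ifs <;> ring
  rw [quadForm, h3]
  ring

lemma lapApply_smul (G : SimpleGraph V) (c : ℝ) (f : V → ℝ) (v : V) :
    lapApply G (fun w => c * f w) v = c * lapApply G f v := by
  simp only [lapApply, ← Finset.mul_sum]
  ring

lemma quadForm_smul (G : SimpleGraph V) (c : ℝ) (f : V → ℝ) :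
    quadForm G (fun w => c * f w) = c ^ 2 * quadForm G f := by
  simp only [quadForm_eq, lapApply_smul, Finset.mul_sum]
  refine Finset.sum_congr rfl fun v _ => ?_
  ring

lemma quadForm_abs_le (G : SimpleGraph V) (f : V → ℝ) :
    quadForm G (fun w => |f w|) ≤ quadForm G f := by
  unfold quadForm
  refine div_le_div_of_nonneg_right ?_ zero_le_two
  refine Finset.sum_le_sum fun v _ => Finset.sum_le_sum fun w _ => ?_
  rw [← sq_abs (f v - f w)]
  exact sq_le_sq' (by linarith [abs_sub_abs_le_abs_sub (f w) (f v), abs_sub_comm (f v) (f w)])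
    (abs_sub_abs_le_abs_sub _ _)

lemma sum_sq_pos {f : V → ℝ} (hf : f ≠ 0) : 0 < ∑ v, f v ^ 2 := by
  obtain ⟨v, hv⟩ := Function.ne_iff.1 hf
  exact Finset.sum_pos' (fun _ _ => sq_nonneg _) ⟨v, Finset.mem_univ _, by
    have : f v ≠ 0 := hv
    positivity⟩

/-- First variation of the quadratic form in the direction of a vertex. -/
lemma quadForm_add_single (G : SimpleGraph V) (f : V → ℝ) (u : V) (t : ℝ) :
    quadForm G (fun w => f w + if w = u then t else 0)
      = quadForm G f + 2 * t * lapApply G f u + t ^ 2 * G.degree u := by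
  have hlap : ∀ v, lapApply G (fun w => f w + if w = u then t else 0) v
      = lapApply G f v + (if v = u then (G.degree u : ℝ) * t else 0)
        - if G.Adj v u then t else 0 := by
    intro v
    simp only [lapApply, Finset.sum_add_distrib]
    rw [sum_nbr_eq G (fun w => if w = u then t else 0)]
    have : (∑ w, if G.Adj v w then (if w = u then t else 0) else 0)
        = if G.Adj v u then t else 0 := by
      rw [Finset.sum_eq_single u]
      · simp
      · intro w _ hw
        simp [hw]
      · simp
    rw [this]
    by_cases hv : v = u
    · subst hv
      simp
      ring
    · simp [hv]
      ring
  have hnb : ∑ v, f v * (if G.Adj v u then t else 0) = t * ∑ w ∈ G.neighborFinset u, f w := by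
    rw [sum_nbr_eq, Finset.mul_sum]
    refine Finset.sum_congr rfl fun v _ => ?_
    simp only [G.adj_comm u v]
    split_ifs <;> ring
  have hself : ∑ v, (if v = u then t else 0) * (if G.Adj v u then t else 0) = 0 := by
    refine Finset.sum_eq_zero fun v _ => ?_
    by_cases hv : v = u
    · subst hv
      simp
    · simp [hv]
  have h4 : ∑ v, (f v + if v = u then t else 0) *
      (lapApply G f v + (if v = u then (G.degree u : ℝ) * t else 0) - if G.Adj v u then t else 0)
      = ∑ v, f v * lapApply G f v + (∑ v, if v = u then f v * (G.degree u * t)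
        + t * lapApply G f v + t * (G.degree u * t) else 0)
        - ∑ v, f v * (if G.Adj v u then t else 0)
        - ∑ v, (if v = u then t else 0) * (if G.Adj v u then t else 0) := by
    rw [← Finset.sum_add_distrib, ← Finset.sum_sub_distrib, ← Finset.sum_sub_distrib]
    refine Finset.sum_congr rfl fun v _ => ?_
    by_cases hv : v = u
    · simp only [hv, if_true]
      ring
    · simp only [hv, if_false]
      ring
  rw [quadForm_eq, quadForm_eq]
  simp only [hlap]
  rw [h4, hnb, hself, Finset.sum_ite_eq' Finset.univ u]
  simp only [Finset.mem_univ, if_true]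
  unfold lapApply
  ring

lemma sum_sq_add_single (f : V → ℝ) (u : V) (t : ℝ) :
    ∑ w, (f w + if w = u then t else 0) ^ 2 = ∑ w, f w ^ 2 + 2 * t * f u + t ^ 2 := by
  have : ∀ w, (f w + if w = u then t else 0) ^ 2
      = f w ^ 2 + if w = u then 2 * t * f w + t ^ 2 else 0 := by
    intro w
    split_ifs <;> ring
  simp only [this, Finset.sum_add_distrib]
  rw [Finset.sum_ite_eq' Finset.univ u]
  simp
  ring

/-- A minimizer of the Rayleigh quotient satisfies the eigenvalue equation. -/
lemma lapApply_eq_of_minimizer {G : SimpleGraph V} {m : ℝ}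
    (hm : ∀ g : V → ℝ, VanishesOnBoundary G g → m * ∑ v, g v ^ 2 ≤ quadForm G g)
    {f : V → ℝ} (hf : VanishesOnBoundary G f) (hle : quadForm G f ≤ m * ∑ v, f v ^ 2)
    {u : V} (hu : IsInterior G u) : lapApply G f u = m * f u := by
  have key : ∀ t : ℝ, 0 ≤ 2 * t * (lapApply G f u - m * f u) + t ^ 2 * (G.degree u - m) := by
    intro t
    have hv : VanishesOnBoundary G (fun w => f w + if w = u then t else 0) := by
      intro w hw
      have : w ≠ u := by
        rintro rfl
        simp only [IsBoundary, IsInterior] at hw hu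
        omega
      simp [hf w hw, this]
    have := hm _ hv
    rw [quadForm_add_single, sum_sq_add_single] at this
    nlinarith
  set A := lapApply G f u - m * f u with hA
  set B := (G.degree u : ℝ) - m
  -- a quadratic `2 t A + t² B` that is nowhere negative has `A = 0`
  have hA0 : A = 0 := by
    by_contra hne
    have hc : (0 : ℝ) < |B| + 1 := by positivity
    have h1 := key (-A / (|B| + 1))
    have h2 : 2 * (-A / (|B| + 1)) * A + (-A / (|B| + 1)) ^ 2 * B
        = A ^ 2 / (|B| + 1) ^ 2 * (B - 2 * (|B| + 1)) := by
      field_simp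
      ring
    rw [h2] at h1
    have h3 : 0 < A ^ 2 / (|B| + 1) ^ 2 := by positivity
    nlinarith [le_abs_self B, abs_nonneg B]
  linarith

/-- The Rayleigh quotient of functions vanishing on the boundary attains its minimum. -/
lemma exists_minimizer {G : SimpleGraph V} (hi : ∃ v, IsInterior G v) :
    ∃ (m : ℝ) (f : V → ℝ), f ≠ 0 ∧ VanishesOnBoundary G f ∧ quadForm G f ≤ m * ∑ v, f v ^ 2 ∧
      ∀ g : V → ℝ, VanishesOnBoundary G g → m * ∑ v, g v ^ 2 ≤ quadForm G g := by
  obtain ⟨u, hu⟩ := hi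
  let S : Set (V → ℝ) := {g | (∑ v, g v ^ 2 = 1) ∧ VanishesOnBoundary G g}
  have hcl : IsClosed S := by
    have hS : S = {g | ∑ v, g v ^ 2 = 1} ∩ ⋂ (v : V) (_ : IsBoundary G v), {g | g v = 0} := by
      ext g
      simp [S, VanishesOnBoundary]
    rw [hS]
    refine IsClosed.inter ?_ ?_
    · exact isClosed_eq (by fun_prop) continuous_const
    · exact isClosed_iInter fun v => isClosed_iInter fun _ =>
        isClosed_eq (continuous_apply v) continuous_const
  have hbd : S ⊆ Set.Icc (fun _ => -1) (fun _ => 1) := by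
    intro g hg
    have : ∀ v, |g v| ≤ 1 := by
      intro v
      rw [← sq_le_one_iff_abs_le_one, ← hg.1]
      exact Finset.single_le_sum (f := fun v => g v ^ 2) (fun _ _ => sq_nonneg _)
        (Finset.mem_univ v)
    exact ⟨fun v => (abs_le.1 (this v)).1, fun v => (abs_le.1 (this v)).2⟩
  have hcpt : IsCompact S := isCompact_Icc.of_isClosed_subset hcl hbd
  have hne : S.Nonempty := by
    refine ⟨fun v => if v = u then 1 else 0, by simp, fun v hv => ?_⟩
    have : v ≠ u := by
      rintro rfl
      simp only [IsBoundary, IsInterior] at hv hu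
      omega
    simp [this]
  obtain ⟨f, hf, hmin⟩ := hcpt.exists_isMinOn (f := quadForm G) hne
    (by unfold quadForm; fun_prop)
  refine ⟨quadForm G f, f, ?_, hf.2, by rw [hf.1, mul_one], fun g hg => ?_⟩
  · rintro rfl
    simpa using hf.1
  · by_cases h0 : g = 0
    · subst h0
      simp [quadForm]
    have hpos := sum_sq_pos h0
    set s := ∑ v, g v ^ 2 with hs
    have hmem : (fun v => (√s)⁻¹ * g v) ∈ S := by
      refine ⟨?_, fun v hv => by simp [hg v hv]⟩
      simp only [mul_pow, ← Finset.mul_sum, inv_pow, Real.sq_sqrt hpos.le]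
      rw [← hs]
      exact inv_mul_cancel₀ hpos.ne'
    have := hmin hmem
    rw [Set.mem_ofPred_eq, quadForm_smul, inv_pow, Real.sq_sqrt hpos.le] at this
    calc quadForm G f * s ≤ s⁻¹ * quadForm G g * s := by gcongr
      _ = quadForm G g := by field_simp

lemma isBoundary_or_isInterior {G : SimpleGraph V} (hG : IsTreeWithBoundary G) (v : V) :
    IsBoundary G v ∨ IsInterior G v := by
  obtain ⟨hT, ⟨x, hx⟩, ⟨y, hy⟩⟩ := hG
  have : Nontrivial V := ⟨x, y, by
    rintro rfl
    simp only [IsBoundary, IsInterior] at hx hy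
    omega⟩
  have := hT.connected.preconnected.degree_pos_of_nontrivial v
  simp only [IsBoundary, IsInterior]
  omega

lemma not_isBoundary_of_isInterior {G : SimpleGraph V} {v : V} (h : IsInterior G v) :
    ¬ IsBoundary G v := by
  simp only [IsBoundary, IsInterior] at h ⊢
  omega

lemma IsDirichletEigenpair.quadForm_eq {G : SimpleGraph V} (hG : IsTreeWithBoundary G) {μ : ℝ}
    {f : V → ℝ} (hf : IsDirichletEigenpair G μ f) : quadForm G f = μ * ∑ v, f v ^ 2 := by
  rw [FK.quadForm_eq, Finset.mul_sum]
  refine Finset.sum_congr rfl fun v _ => ?_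
  rcases isBoundary_or_isInterior hG v with h | h
  · simp [hf.2.1 v h]
  · rw [hf.2.2 v h]
    ring

/-- The variational characterization of `λ(G)`, attained at some function. -/
lemma dirichletLambda_spec {G : SimpleGraph V} (hG : IsTreeWithBoundary G) :
    (∀ g : V → ℝ, VanishesOnBoundary G g → dirichletLambda G * ∑ v, g v ^ 2 ≤ quadForm G g) ∧
    ∃ f, IsDirichletEigenpair G (dirichletLambda G) f := by
  obtain ⟨m, f, hf0, hf, hle, hmin⟩ := exists_minimizer hG.2.1
  have hpair : IsDirichletEigenpair G m f :=
    ⟨hf0, hf, fun v hv => lapApply_eq_of_minimizer hmin hf hle hv⟩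
  have hm : dirichletLambda G = m := by
    refine IsLeast.csInf_eq ⟨⟨f, hpair⟩, ?_⟩
    rintro μ ⟨g, hg⟩
    have h1 := hmin g hg.2.1
    rw [hg.quadForm_eq hG] at h1
    exact le_of_mul_le_mul_right h1 (sum_sq_pos hg.1)
  rw [hm]
  exact ⟨hmin, f, hpair⟩

lemma isDirichletEigenpair_of_le {G : SimpleGraph V} (hG : IsTreeWithBoundary G) {f : V → ℝ}
    (hf0 : f ≠ 0) (hf : VanishesOnBoundary G f)
    (hle : quadForm G f ≤ dirichletLambda G * ∑ v, f v ^ 2) :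
    IsDirichletEigenpair G (dirichletLambda G) f :=
  ⟨hf0, hf, fun _ hv => lapApply_eq_of_minimizer (dirichletLambda_spec hG).1 hf hle hv⟩

lemma IsDirichletEigenpair.abs {G : SimpleGraph V} (hG : IsTreeWithBoundary G) {f : V → ℝ}
    (hf : IsDirichletEigenpair G (dirichletLambda G) f) :
    IsDirichletEigenpair G (dirichletLambda G) (fun v => |f v|) := by
  refine isDirichletEigenpair_of_le hG ?_ ?_ ?_
  · intro h
    apply hf.1
    ext v
    simpa using congrFun h v
  · intro v hv
    simp [hf.2.1 v hv]
  · simp only [sq_abs]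
    rw [← hf.quadForm_eq hG]
    exact quadForm_abs_le G f

lemma eq_of_adj_of_isBoundary {G : SimpleGraph V} {v x y : V} (hv : IsBoundary G v)
    (hx : G.Adj v x) (hy : G.Adj v y) : x = y := by
  rw [IsBoundary, ← card_neighborFinset_eq_degree, Finset.card_eq_one] at hv
  obtain ⟨z, hz⟩ := hv
  have h1 : x ∈ G.neighborFinset v := by simpa using hx
  have h2 : y ∈ G.neighborFinset v := by simpa using hy
  rw [hz, Finset.mem_singleton] at h1 h2
  rw [h1, h2]

/-- A non-negative eigenfunction has no interior zero: at an interior zero all neighbours are zeros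
too, and this spreads over the whole tree. -/
lemma IsDirichletEigenpair.ne_zero_of_nonneg {G : SimpleGraph V} (hG : IsTreeWithBoundary G)
    {μ : ℝ} {f : V → ℝ} (hf : IsDirichletEigenpair G μ f) (h0 : ∀ v, 0 ≤ f v) {v : V}
    (hv : IsInterior G v) : f v ≠ 0 := by
  intro hfv
  have hnb : ∀ x, IsInterior G x → f x = 0 → ∀ y, G.Adj x y → f y = 0 := by
    intro x hx hfx y hy
    have := hf.2.2 x hx
    rw [lapApply, hfx] at this
    have hs : ∑ w ∈ G.neighborFinset x, f w = 0 := by linarith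
    rw [Finset.sum_eq_zero_iff_of_nonneg (fun _ _ => h0 _)] at hs
    exact hs y (by simpa using hy)
  apply hf.1
  ext u
  obtain ⟨W⟩ := hG.1.connected v u
  have key : ∀ {x y : V}, G.Walk x y → (f x = 0 ∧ ∀ z, G.Adj x z → f z = 0) → f y = 0 := by
    intro x y W
    induction W with
    | nil => exact fun h => h.1
    | @cons a b c hab W ih =>
      intro h
      apply ih
      refine ⟨h.2 _ hab, ?_⟩
      rcases isBoundary_or_isInterior hG b with hb | hb
      · intro z hz
        rw [← eq_of_adj_of_isBoundary hb hab.symm hz]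
        exact h.1
      · exact hnb b hb (h.2 _ hab)
  exact key W ⟨hfv, hnb v hv hfv⟩

/-- `λ(G)` is simple: an eigenfunction with an interior zero would have an absolute value
contradicting the positivity of non-negative eigenfunctions. -/
lemma IsDirichletEigenpair.proportional {G : SimpleGraph V} (hG : IsTreeWithBoundary G)
    {f g : V → ℝ} (hf : IsDirichletEigenpair G (dirichletLambda G) f)
    (hg : IsDirichletEigenpair G (dirichletLambda G) g) {u : V} (hu : IsInterior G u) (v : V) :
    g u * f v = f u * g v := by
  by_contra hne
  have hh : IsDirichletEigenpair G (dirichletLambda G) (fun v => g u * f v - f u * g v) := by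
    refine ⟨fun h => hne (sub_eq_zero.1 (congrFun h v)), fun w hw => ?_, fun w hw => ?_⟩
    · simp [hf.2.1 w hw, hg.2.1 w hw]
    · have h1 := hf.2.2 w hw
      have h2 := hg.2.2 w hw
      simp only [lapApply, Finset.sum_sub_distrib, ← Finset.mul_sum] at h1 h2 ⊢
      linear_combination g u * h1 - f u * h2
  apply (hh.abs hG).ne_zero_of_nonneg hG (fun _ => abs_nonneg _) hu
  rw [mul_comm, sub_self, abs_zero]

end Spectral

end FK

namespace FK

open SimpleGraph

/-! ### Switching inequalities in a Faber-Krahn tree -/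

section Minimal

variable {V : Type*} [Fintype V] {G : SimpleGraph V} {f : V → ℝ}

lemma Switchable.isInterior {a₁ n₁ n₂ a₂ : V} (hG : IsTreeWithBoundary G)
    (h : Switchable G a₁ n₁ n₂ a₂) : IsInterior G n₁ := by
  obtain ⟨x, hx, hadj⟩ := h.exists_nbr hG.1
  exact (isBoundary_or_isInterior hG n₁).resolve_left fun hb =>
    hx (eq_of_adj_of_isBoundary hb hadj h.adj₁.symm)

lemma Switchable.quadForm_eq {a₁ n₁ n₂ a₂ : V} (hG : G.IsTree)
    (h : Switchable G a₁ n₁ n₂ a₂) (g : V → ℝ) :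
    quadForm (switch G a₁ n₁ n₂ a₂) g
      = quadForm G g - 2 * ((g a₁ - g a₂) * (g n₂ - g n₁)) := by
  rw [FK.quadForm_eq, FK.quadForm_eq]
  simp only [h.lapApply_eq hG, mul_sub, mul_add, Finset.sum_sub_distrib, Finset.sum_add_distrib,
    mul_ite, mul_zero]
  simp only [Finset.sum_ite_eq', Finset.mem_univ, if_true]
  ring

/-- If `G` minimizes `λ` in its class, with eigenfunction `f`, then a switch that does not increase
the quadratic form of `f` turns `G` into another minimizer with the same eigenfunction; comparing
the eigenvalue equations of the two trees gives the equalities. -/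
lemma Switchable.eq_of_nonneg {a₁ n₁ n₂ a₂ : V} (hG : IsTreeWithBoundary G)
    (hmin : ∀ G' : SimpleGraph V, IsTreeWithBoundary G' → degreeMultiset G' = degreeMultiset G →
      dirichletLambda G ≤ dirichletLambda G')
    (hf : IsDirichletEigenpair G (dirichletLambda G) f)
    (h : Switchable G a₁ n₁ n₂ a₂) (hle : 0 ≤ (f a₁ - f a₂) * (f n₂ - f n₁)) :
    f a₁ = f a₂ ∧ (IsInterior G a₁ → f n₁ = f n₂) := by
  set G' := switch G a₁ n₁ n₂ a₂ with hG'def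
  have hG' : IsTreeWithBoundary G' := h.isTreeWithBoundary hG
  have hl : dirichletLambda G ≤ dirichletLambda G' := hmin G' hG' (h.degreeMultiset_eq hG.1)
  have hv : VanishesOnBoundary G' f := fun v hv => hf.2.1 v ((h.isBoundary_iff hG.1 v).1 hv)
  have hq := h.quadForm_eq hG.1 f
  have hq0 := hf.quadForm_eq hG
  have hpos := sum_sq_pos hf.1
  have hge := (dirichletLambda_spec hG').1 f hv
  have hl' : dirichletLambda G' = dirichletLambda G := by
    refine le_antisymm (le_of_mul_le_mul_right ?_ hpos) hl
    linarith
  have hp : IsDirichletEigenpair G' (dirichletLambda G') f := by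
    refine isDirichletEigenpair_of_le hG' hf.1 hv ?_
    rw [hl']
    linarith
  have hlap : ∀ v, IsInterior G v → lapApply G' f v = lapApply G f v := by
    intro v hv
    rw [hf.2.2 v hv, hp.2.2 v ((h.isInterior_iff hG.1 v).2 hv), hl']
  have d1 := h.ne_an
  have d2 := h.symm.ne_an
  have d3 := h.ne_aa hG.1
  have d4 := h.ne
  have d5 := h.adj₁.ne
  constructor
  · have := hlap n₁ (h.isInterior hG)
    rw [h.lapApply_eq hG.1] at this
    simp only [d5.symm, d2.symm, d4, if_true, if_false] at this
    linarith
  · intro ha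
    have := hlap a₁ ha
    rw [h.lapApply_eq hG.1] at this
    simp only [d5, d3, d1, if_true, if_false] at this
    linarith

/-- `G` is a tree with boundary minimizing `λ` in its class, rooted at a maximum `r` of the
non-negative eigenfunction `f`. -/
structure RootedMin (G : SimpleGraph V) (f : V → ℝ) (r : V) : Prop where
  tree : IsTreeWithBoundary G
  min : ∀ G' : SimpleGraph V, IsTreeWithBoundary G' → degreeMultiset G' = degreeMultiset G →
    dirichletLambda G ≤ dirichletLambda G'
  pair : IsDirichletEigenpair G (dirichletLambda G) f
  nonneg : ∀ v, 0 ≤ f v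
  max : ∀ v, f v ≤ f r

namespace RootedMin

variable {r : V}

/-- The order of the values of `f` at the inner vertices `n₁`, `n₂` of the path `a₁ n₁ ⋯ n₂ a₂`
passes on to its ends. -/
lemma le_of_le (H : RootedMin G f r) {a₁ n₁ n₂ a₂ : V} (h : Switchable G a₁ n₁ n₂ a₂)
    (hn : f n₁ ≤ f n₂) : f a₁ ≤ f a₂ := by
  by_contra hlt
  push Not at hlt
  have := (h.eq_of_nonneg H.tree H.min H.pair
    (mul_nonneg (by linarith) (by linarith))).1
  linarith

lemma lt_of_lt (H : RootedMin G f r) {a₁ n₁ n₂ a₂ : V} (h : Switchable G a₁ n₁ n₂ a₂)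
    (ha : IsInterior G a₁) (hn : f n₁ < f n₂) : f a₁ < f a₂ := by
  refine lt_of_le_of_ne (H.le_of_le h hn.le) fun heq => ?_
  have := (h.eq_of_nonneg H.tree H.min H.pair (by simp [heq])).2 ha
  linarith

lemma pos_iff (H : RootedMin G f r) (v : V) : 0 < f v ↔ IsInterior G v := by
  constructor
  · intro h
    exact (isBoundary_or_isInterior H.tree v).resolve_left fun hb => by
      rw [H.pair.2.1 v hb] at h
      exact lt_irrefl _ h
  · intro h
    exact lt_of_le_of_ne (H.nonneg v) (H.pair.ne_zero_of_nonneg H.tree H.nonneg h).symm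

lemma root_pos (H : RootedMin G f r) : 0 < f r := by
  obtain ⟨v, hv⟩ := H.tree.2.1
  exact ((H.pos_iff v).2 hv).trans_le (H.max v)

lemma exists_parent (H : RootedMin G f r) {v : V} (hv : G.dist r v ≠ 0) :
    ∃ p, IsChild G r p v := by
  obtain ⟨P, hP⟩ := H.tree.1.connected.exists_walk_length_eq_dist v r
  cases P with
  | nil => simp at hv
  | @cons _ p _ h Q =>
    refine ⟨p, h.symm, ?_⟩
    have h1 := dist_le Q
    have h2 := H.tree.1.connected.dist_triangle (u := v) (v := p) (w := r)
    rw [dist_eq_one_iff_adj.2 h] at h2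
    rw [Walk.length_cons] at hP
    rw [G.dist_comm (u := r), G.dist_comm (u := r)]
    omega

lemma parent_unique (H : RootedMin G f r) {p q v : V} (hp : IsChild G r p v)
    (hq : IsChild G r q v) : p = q := by
  by_contra hne
  -- otherwise `r` and `q` lie on different sides of the edge `pv`
  have h1 : G.dist v q = 1 := dist_eq_one_iff_adj.2 hq.1.symm
  rcases H.tree.1.dist_eq_dist_add_one_of_adj q hp.1 with h | h
  · have := dist_eq_of_separated H.tree.1 hp.1 hp.2 h
    have := hp.2
    have := hq.2
    omega
  · have h2 : G.dist q v = 1 := dist_eq_one_iff_adj.2 hq.1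
    have := H.tree.1.connected.pos_dist_of_ne (Ne.symm hne)
    omega

lemma exists_child (H : RootedMin G f r) {v : V} (hv : IsInterior G v) :
    ∃ c, IsChild G r v c := by
  by_contra hno
  push Not at hno
  have hpar : ∀ x, G.Adj v x → IsChild G r x v := by
    intro x hx
    rcases H.tree.1.dist_eq_dist_add_one_of_adj r hx with h | h
    · exact ⟨hx.symm, h⟩
    · exact absurd ⟨hx, h⟩ (hno x)
  have hc : 1 < (G.neighborFinset v).card := by
    rw [card_neighborFinset_eq_degree]
    exact hv
  obtain ⟨x, hx, y, hy, hxy⟩ := Finset.one_lt_card.1 hc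
  rw [mem_neighborFinset] at hx hy
  exact hxy (H.parent_unique (hpar x hx) (hpar y hy))

lemma isInterior_of_child (H : RootedMin G f r) {p v : V} (h : IsChild G r p v) :
    IsInterior G p := by
  by_cases h0 : G.dist r p = 0
  · rw [H.tree.1.connected.dist_eq_zero_iff] at h0
    exact (H.pos_iff p).1 (h0 ▸ H.root_pos)
  · obtain ⟨q, hq⟩ := H.exists_parent h0
    refine (isBoundary_or_isInterior H.tree p).resolve_left fun hb => ?_
    have := eq_of_adj_of_isBoundary hb h.1 hq.1.symm
    subst this
    have := h.2
    have := hq.2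
    omega

/-- If `w₁`, `w₂` are children of distinct `p₁`, `p₂` and neither `w₁` nor `w₂` lies on the path
from the root to the other one's parent (the heights exclude all cases but equality), then `w₁ p₁ ⋯ p₂ w₂` is a path. -/
lemma switchable (H : RootedMin G f r) {p₁ w₁ p₂ w₂ : V} (h₁ : IsChild G r p₁ w₁)
    (h₂ : IsChild G r p₂ w₂) (hne : p₁ ≠ p₂) (ha : w₁ ≠ p₂) (hb : w₂ ≠ p₁)
    (hl₁ : G.dist r p₂ ≤ G.dist r w₁) (hl₂ : G.dist r p₁ ≤ G.dist r w₂) :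
    Switchable G w₁ p₁ p₂ w₂ := by
  have aux : ∀ {p w q : V}, IsChild G r p w → w ≠ q → G.dist r q ≤ G.dist r w →
      G.dist p q < G.dist w q := by
    intro p w q h hwq hl
    rcases H.tree.1.dist_eq_dist_add_one_of_adj q h.1 with h' | h'
    · have h1 := dist_eq_of_separated H.tree.1 h.1 h.2 h'
      have h2 := h.2
      have := H.tree.1.connected.pos_dist_of_ne hwq
      omega
    · rw [G.dist_comm (u := p), G.dist_comm (u := w)]
      omega
  refine ⟨h₁.1.symm, h₂.1.symm, hne, aux h₁ ha hl₁, ?_⟩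
  rw [G.dist_comm (u := p₁) (v := p₂)]
  exact aux h₂ hb hl₂

/-- The eigenfunction does not increase away from the root. If `f a < f b` for an ancestor `a` of
`b`, then switching propagates this to the parent of `a` and a child of `b`, and so on until the
root, where `f` is maximal. -/
lemma le_of_ancestor (H : RootedMin G f r) :
    ∀ (k : ℕ) (a b : V), G.dist r a = k → a ≠ b → G.dist r b = G.dist r a + G.dist a b →
      f b ≤ f a := by
  intro k
  induction k with
  | zero =>
    intro a b ha _ _
    rw [H.tree.1.connected.dist_eq_zero_iff] at ha
    exact ha ▸ H.max b
  | succ k ih =>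
    intro a b ha hne hab
    by_contra hlt
    push Not at hlt
    obtain ⟨a', ha'⟩ := H.exists_parent (v := a) (by omega)
    have hb : IsInterior G b := (H.pos_iff b).1 ((H.nonneg a).trans_lt hlt)
    obtain ⟨c, hc⟩ := H.exists_child hb
    have tri := fun x y z => H.tree.1.connected.dist_triangle (u := x) (v := y) (w := z)
    have h1 := tri r a' b
    have h2 := tri r a c
    have h3 := tri r a' c
    have h4 := tri a' a c
    have h5 := tri a b c
    have h6 := dist_eq_one_iff_adj.2 ha'.1
    have h7 := dist_eq_one_iff_adj.2 hc.1
    have h8 := ha'.2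
    have h9 := hc.2
    have hs : Switchable G a' a b c :=
      ⟨ha'.1, hc.1.symm, hne, by omega, by rw [G.dist_comm (u := c)]; omega⟩
    have := H.lt_of_lt hs (H.isInterior_of_child ha') hlt
    have hle := ih a' c (by omega) (by rintro rfl; omega) (by omega)
    linarith

/-- The values of `f` on one level dominate those on the next level. -/
lemma le_of_succ_level (H : RootedMin G f r) :
    ∀ (k : ℕ) (v w : V), G.dist r v = k → G.dist r w = k + 1 → f w ≤ f v := by
  intro k
  induction k with
  | zero =>
    intro v w hv _
    rw [H.tree.1.connected.dist_eq_zero_iff] at hv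
    exact hv ▸ H.max w
  | succ k ih =>
    intro v w hv hw
    obtain ⟨q, hq⟩ := H.exists_parent (v := w) (by omega)
    obtain ⟨p, hp⟩ := H.exists_parent (v := v) (by omega)
    have h1 := hq.2
    have h2 := hp.2
    by_cases hqv : q = v
    · subst hqv
      refine H.le_of_ancestor _ q w rfl hq.1.ne ?_
      rw [dist_eq_one_iff_adj.2 hq.1, h1]
    · have hs : Switchable G w q p v := by
        refine H.switchable hq hp ?_ ?_ (Ne.symm hqv) (by omega) (by omega)
        · rintro rfl
          omega
        · rintro rfl
          omega
      exact H.le_of_le hs (ih p q (by omega) (by omega))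

lemma le_of_level_lt (H : RootedMin G f r) :
    ∀ (k : ℕ) (v w : V), G.dist r w = G.dist r v + 1 + k → f w ≤ f v := by
  intro k
  induction k with
  | zero => exact fun v w h => H.le_of_succ_level _ v w rfl h
  | succ k ih =>
    intro v w h
    obtain ⟨q, hq⟩ := H.exists_parent (v := w) (by omega)
    have h1 := hq.2
    exact (H.le_of_succ_level _ q w rfl h1).trans (ih v q (by omega))

end RootedMin

/-! ### The spiral-like ordering -/

/-- The position of a vertex `v` of height `h` in the breadth-first ordering in which the children
of a vertex are ordered by `e`. It is the number with the digits `1, e v₁, …, e v_h = e v` in base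
`N`, where `v₁, …, v_h` are the vertices after the root on the path from the root to `v`. -/
def bfsKey (N : ℕ) (e : V → ℕ) (par : V → V) : ℕ → V → ℕ
  | 0, _ => 1
  | h + 1, v => N * bfsKey N e par h (par v) + e v

lemma exists_sorted_index (f : V → ℝ) :
    ∃ e : V → ℕ, Function.Injective e ∧ (∀ v, e v < Fintype.card V) ∧
      ∀ v w, e v < e w → f w ≤ f v := by
  let c := Fintype.equivFin V
  let g : Fin (Fintype.card V) → ℝ := fun i => - f (c.symm i)
  let σ := Tuple.sort g
  refine ⟨fun v => (σ.symm (c v) : ℕ), ?_, fun v => (σ.symm (c v)).2, fun v w h => ?_⟩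
  · intro v w h
    simpa using Fin.ext h
  · have := Tuple.monotone_sort g (le_of_lt (Fin.lt_def.2 h))
    simpa [g, σ] using this

/-- The breadth-first ordering with siblings ordered by decreasing `f` satisfies (S1) and (S2) by
construction. The switching inequality for two children of different parents of equal height shows
inductively that `f` does not increase along it, whence (S3), as `f` is positive exactly on the
interior. -/
lemma RootedMin.exists_order {r : V} (H : RootedMin G f r) :
    ∃ lt : V → V → Prop, IsSLOOrdering G r lt ∧ ∀ v w, lt v w → f w ≤ f v := by
  obtain ⟨e, he, hN, hes⟩ := exists_sorted_index f
  set N := Fintype.card V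
  have hpar : ∀ v, ∃ p, G.dist r v ≠ 0 → IsChild G r p v := by
    intro v
    by_cases h : G.dist r v = 0
    · exact ⟨v, fun h' => absurd h h'⟩
    · obtain ⟨p, hp⟩ := H.exists_parent h
      exact ⟨p, fun _ => hp⟩
  choose par hpar using hpar
  let K : V → ℕ := fun v => bfsKey N e par (G.dist r v) v
  have hK0 : ∀ v, G.dist r v = 0 → K v = 1 := by
    intro v h
    simp only [K, h, bfsKey]
  have hK : ∀ {p v}, IsChild G r p v → K v = N * K p + e v := by
    intro p v h
    have hp : par v = p := H.parent_unique (hpar v (by rw [h.2]; omega)) h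
    simp only [K, h.2, bfsKey, hp]
  have hN2 : 2 ≤ N := by
    obtain ⟨v, hv⟩ := H.tree.2.1
    exact le_trans hv (G.degree_lt_card_verts v).le
  -- vertices of height `h` have keys between `N ^ h` and `2 * N ^ h`
  have hbound : ∀ (h : ℕ) (v : V), G.dist r v = h → N ^ h ≤ K v ∧ K v < 2 * N ^ h := by
    intro h
    induction h with
    | zero =>
      intro v hv
      rw [hK0 v hv]
      simp
    | succ h ih =>
      intro v hv
      obtain ⟨p, hp⟩ := H.exists_parent (v := v) (by omega)
      have hp2 := hp.2
      obtain ⟨h1, h2⟩ := ih p (by omega)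
      have h3 := hN v
      rw [hK hp, pow_succ]
      constructor <;> nlinarith
  have hlevel : ∀ v w, K v < K w → G.dist r v ≤ G.dist r w := by
    intro v w h
    by_contra hlt
    push Not at hlt
    have h1 := (hbound _ v rfl).1
    have h2 := (hbound _ w rfl).2
    have h3 : N ^ (G.dist r w + 1) ≤ N ^ G.dist r v := Nat.pow_le_pow_right (by omega) hlt
    rw [pow_succ] at h3
    nlinarith [Nat.zero_le (N ^ G.dist r w)]
  have hchild : ∀ {p q v w}, IsChild G r p v → IsChild G r q w → K p < K q → K v < K w := by
    intro p q v w hp hq h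
    rw [hK hp, hK hq]
    have := hN v
    nlinarith
  have hinj' : ∀ (h : ℕ) (v w : V), G.dist r v = h → G.dist r w = h → K v = K w → v = w := by
    intro h
    induction h with
    | zero =>
      intro v w hv hw _
      rw [H.tree.1.connected.dist_eq_zero_iff] at hv hw
      rw [← hv, ← hw]
    | succ h ih =>
      intro v w hv hw hvw
      obtain ⟨p, hp⟩ := H.exists_parent (v := v) (by omega)
      obtain ⟨q, hq⟩ := H.exists_parent (v := w) (by omega)
      have hp2 := hp.2
      have hq2 := hq.2
      have hpq : K p = K q := by
        rcases lt_trichotomy (K p) (K q) with hlt | heq | hlt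
        · exact absurd hvw (hchild hp hq hlt).ne
        · exact heq
        · exact absurd hvw (hchild hq hp hlt).ne'
      rw [hK hp, hK hq, hpq] at hvw
      exact he (by omega)
  have hinj : Function.Injective K := by
    intro v w h
    refine hinj' _ v w rfl ?_ h
    by_contra hne
    -- the key intervals of different heights are disjoint
    have aux : ∀ x y, K x = K y → ¬ G.dist r x < G.dist r y := by
      intro x y hxy hlt
      have h1 := (hbound _ y rfl).1
      have h2 := (hbound _ x rfl).2
      have h3 : N ^ (G.dist r x + 1) ≤ N ^ G.dist r y := Nat.pow_le_pow_right (by omega) hlt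
      rw [pow_succ] at h3
      nlinarith [Nat.zero_le (N ^ G.dist r x)]
    have h1 := aux v w h
    have h2 := aux w v h.symm
    omega
  have hmono' : ∀ (h : ℕ) (v w : V), G.dist r v = h → G.dist r w = h → K v < K w →
      f w ≤ f v := by
    intro h
    induction h with
    | zero =>
      intro v w hv hw hlt
      rw [hK0 v hv, hK0 w hw] at hlt
      omega
    | succ h ih =>
      intro v w hv hw hlt
      obtain ⟨p, hp⟩ := H.exists_parent (v := v) (by omega)
      obtain ⟨q, hq⟩ := H.exists_parent (v := w) (by omega)
      have hp2 := hp.2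
      have hq2 := hq.2
      rcases lt_trichotomy (K p) (K q) with hpq | hpq | hpq
      · have hs : Switchable G w q p v := by
          refine H.switchable hq hp ?_ ?_ ?_ (by omega) (by omega)
          · rintro rfl
            exact lt_irrefl _ hpq
          · rintro rfl
            omega
          · rintro rfl
            omega
        exact H.le_of_le hs (ih p q (by omega) (by omega) hpq)
      · rw [hK hp, hK hq, hpq] at hlt
        exact hes v w (by omega)
      · exact absurd hlt (hchild hq hp hpq).not_gt
  have hmono : ∀ v w, K v < K w → f w ≤ f v := by
    intro v w h
    rcases (hlevel v w h).lt_or_eq with hlt | heq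
    · exact H.le_of_level_lt (G.dist r w - (G.dist r v + 1)) v w (by omega)
    · exact hmono' _ v w heq rfl h
  refine ⟨fun v w => K v < K w, ⟨?_, hlevel, fun _ _ _ _ h h₁ h₂ => hchild h₁ h₂ h, ?_⟩, hmono⟩
  · exact
      { trichotomous := fun v w h1 h2 => hinj (by omega)
        irrefl := fun v => lt_irrefl _
        trans := fun _ _ _ => lt_trans }
  · intro v w h hv
    refine (isBoundary_or_isInterior H.tree w).resolve_right fun hw => ?_
    have h1 := (H.pos_iff w).2 hw
    have h2 := hmono v w h
    rw [H.pair.2.1 v hv] at h2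
    linarith

/-- The second half of the theorem. By simplicity of `λ(G)` one eigenfunction decides about the
monotonicity of all of them. -/
lemma exists_order_of_min (hG : IsTreeWithBoundary G)
    (hmin : ∀ G' : SimpleGraph V, IsTreeWithBoundary G' → degreeMultiset G' = degreeMultiset G →
      dirichletLambda G ≤ dirichletLambda G') :
    ∃ (v₀ : V) (lt : V → V → Prop), IsSLOOrdering G v₀ lt ∧
      ∀ f : V → ℝ, (∀ v, 0 ≤ f v) → IsDirichletEigenpair G (dirichletLambda G) f →
        ∀ v w, lt v w → f w ≤ f v := by
  obtain ⟨f₀, hf₀⟩ := (dirichletLambda_spec hG).2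
  set f : V → ℝ := fun v => |f₀ v| with hfdef
  have hf : IsDirichletEigenpair G (dirichletLambda G) f := hf₀.abs hG
  obtain ⟨u, hu⟩ := hG.2.1
  have : Nonempty V := ⟨u⟩
  obtain ⟨r, hr⟩ := Finite.exists_max f
  have H : RootedMin G f r := ⟨hG, hmin, hf, fun _ => abs_nonneg _, hr⟩
  obtain ⟨lt, hlt, hmono⟩ := H.exists_order
  refine ⟨r, lt, hlt, fun g hg0 hg v w hvw => ?_⟩
  have hfu := (H.pos_iff u).2 hu
  have h1 := hf.proportional hG hg hu v
  have h2 := hf.proportional hG hg hu w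
  refine le_of_mul_le_mul_left ?_ hfu
  rw [← h1, ← h2]
  exact mul_le_mul_of_nonneg_left (hmono v w hvw) (hg0 u)

end Minimal

end FK

namespace FK

/-- **Lemma.** Let `G` be a tree with boundary with degree sequence `π`. Then
there is an SLO-tree `G'` on the same vertex set in `T_π` with
`λ(G') ≤ λ(G)`. Moreover, if `G` has the Faber-Krahn property in `T_π`, then
`G` itself admits an SLO-ordering `≺`, along which every non-negative
eigenfunction `f` to `λ(G)` is non-increasing: `v ≺ w → f v ≥ f w`. -/
theorem exists_SLOTree_le {V : Type*} [Fintype V] [DecidableEq V]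
    (G : SimpleGraph V) (hG : IsTreeWithBoundary G)
    (π : Multiset ℕ) (hπ : degreeMultiset G = π) :
    (∃ G' : SimpleGraph V, IsTreeWithBoundary G' ∧ degreeMultiset G' = π ∧
        (∃ (v₀ : V) (lt : V → V → Prop), IsSLOOrdering G' v₀ lt) ∧
        dirichletLambda G' ≤ dirichletLambda G) ∧
    ((∀ G' : SimpleGraph V, IsTreeWithBoundary G' → degreeMultiset G' = π →
        dirichletLambda G ≤ dirichletLambda G') →
      ∃ (v₀ : V) (lt : V → V → Prop), IsSLOOrdering G v₀ lt ∧
        ∀ f : V → ℝ, (∀ v, 0 ≤ f v) →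
          IsDirichletEigenpair G (dirichletLambda G) f →
          ∀ v w, lt v w → f w ≤ f v) := by
  subst hπ
  refine ⟨?_, exists_order_of_min hG⟩
  -- the class is finite, so it has a minimizer, to which the second half applies
  obtain ⟨G', ⟨hG', hd⟩, hmin⟩ := Set.exists_min_image
    {G' : SimpleGraph V | IsTreeWithBoundary G' ∧ degreeMultiset G' = degreeMultiset G}
    dirichletLambda (Set.toFinite _) ⟨G, hG, rfl⟩
  obtain ⟨v₀, lt, hlt, -⟩ := exists_order_of_min hG'
    fun G'' h1 h2 => hmin G'' ⟨h1, h2.trans hd⟩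
  exact ⟨G', hG', hd, ⟨v₀, lt, hlt⟩, hmin G ⟨hG, rfl⟩⟩

end FK
end
end
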